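/- arXiv:2105.08608 — 4 statements merged into one kernel-verified Lean document; each statement's English description precedes it below -/
import Mathlib

section
/- Let k ≥ 2 be an integer, let 0 < α < (10^k · k^k · (k+1)!)^{-1}, and let n be an integer with n ≡ 0 (mod k) and n sufficiently large in terms of α (1/n ≪ α). Let 𝓗_k(n,n/k) be the balanced (1,k)-partite (k+1)-graph with partition classes X (|X| = n/k) and [n], whose edges are the sets e ∪ {x} with x ∈ X and e ∈ H_k(n,n/k) = { e ∈ binom([n],k) : e ∩ [n/k] ≠ ∅ and e ∩ ([n]\[n/k]) ≠ ∅ }. If H is a balanced (1,k)-partite (k+1)-graph on the same vertex set (with the same partition classes X, [n]) such that every vertex of H is α-good with respect to 𝓗_k(n,n/k), then H has a perfect matching. -/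
/-- The balanced `(1,k)`-partite `(k+1)`-graph `𝓗_k(n, n/k)` on `X ⊕ [n]`
(`X = Fin (n/k)`): edges are `{x} ∪ e` where `x ∈ X` and `e` is a `k`-subset of
`[n]` meeting both `[n/k]` (the first `n/k` elements) and its complement. -/
def calHk (n k : ℕ) : Finset (Finset (Fin (n / k) ⊕ Fin n)) :=
  Finset.univ.biUnion (fun x : Fin (n / k) =>
    ((Finset.powersetCard k (Finset.univ : Finset (Fin n))).filter
      (fun s => (∃ v : Fin n, v ∈ s ∧ (v : ℕ) < n / k) ∧ (∃ v : Fin n, v ∈ s ∧ n / k ≤ (v : ℕ)))).image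
      (fun s => insert (Sum.inl x) (s.image Sum.inr)))

/-- The link `N_H(v)` of a vertex `v`: the `k`-sets `e \ {v}` over edges `e ∋ v`. -/
def linkOf {V : Type*} [DecidableEq V] (H : Finset (Finset V)) (v : V) :
    Finset (Finset V) :=
  (H.filter (fun e => v ∈ e)).image (fun e => e.erase v)

open Finset in
/-- A `(k+1)`-partite `(k+1)`-graph with parts of size `m` in which every vertex misses at most `D`
of the transversal edges through it has a perfect matching, provided that
`(k+1) * D < (m-1)(m-2)⋯(m-k)`. -/
lemma exists_perms_forall_of_card_le {k m D : ℕ} (F : (Fin (k + 1) → Fin m) → Prop)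
    [DecidablePred F]
    (hD : ∀ j v, #{f : Fin (k + 1) → Fin m | f j = v ∧ ¬ F f} ≤ D)
    (hm : (k + 1) * D < (m - 1).descFactorial k) :
    ∃ σ : Fin (k + 1) → Equiv.Perm (Fin m), ∀ i, F (fun j => σ j i) := by
  obtain ⟨σ, -, hσ⟩ := (univ : Finset (Fin (k + 1) → Equiv.Perm (Fin m))).exists_max_image
    (fun σ => #{i | F (fun j => σ j i)}) univ_nonempty
  refine ⟨σ, ?_⟩
  by_contra! ⟨i₀, hi₀⟩
  let t : (Fin k ↪ {i : Fin m // i ≠ i₀}) → Fin (k + 1) → Fin m :=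
    fun g => Fin.cons i₀ (fun j => (g j : Fin m))
  have t_zero (g) : t g 0 = i₀ := rfl
  have t_inj (g) : Function.Injective (t g) := by
    refine Fin.cons_injective_iff.2 ⟨?_, Subtype.val_injective.comp g.injective⟩
    rintro ⟨j, hj⟩
    exact (g j).2 hj
  -- Rotating along some injective tuple starting at the bad index yields only edges.
  obtain ⟨g, hg⟩ : ∃ g, ∀ l, F (fun j => σ j (t g (l + j))) := by
    by_contra! hbad
    have hcover : (univ : Finset (Fin k ↪ {i : Fin m // i ≠ i₀})) ⊆
        univ.biUnion (fun l : Fin (k + 1) => {g | ¬ F (fun j => σ j (t g (l + j)))}) := by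
      intro g _
      obtain ⟨l, hl⟩ := hbad g
      simpa using ⟨l, hl⟩
    have hl (l : Fin (k + 1)) : #{g | ¬ F (fun j => σ j (t g (l + j)))} ≤ D := by
      refine le_trans ?_ (hD (-l) (σ (-l) i₀))
      refine card_le_card_of_injOn (fun g j => σ j (t g (l + j))) ?_ ?_
      · intro g hg
        have hg' : ¬ F (fun j => σ j (t g (l + j))) := by simpa using hg
        simp [hg', t_zero]
      · intro g₁ _ g₂ _ h
        ext j : 2
        have := congrFun h (j.succ - l)
        simpa [t] using this
    have hcard := (card_le_card hcover).trans card_biUnion_le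
    have hsum : ∑ l : Fin (k + 1), #{g | ¬ F (fun j => σ j (t g (l + j)))} ≤ (k + 1) * D := by
      simpa using sum_le_card_nsmul univ _ D (fun l _ => hl l)
    have : #(univ : Finset (Fin k ↪ {i : Fin m // i ≠ i₀})) = (m - 1).descFactorial k := by
      rw [card_univ, Fintype.card_embedding_eq, Fintype.card_fin, Fintype.card_subtype_compl]
      simp
    omega
  let τ : Fin (k + 1) ↪ Fin m := ⟨t g, t_inj g⟩
  let ρ : Fin (k + 1) → Equiv.Perm (Fin m) := fun j =>
    ((Equiv.addRight j : Equiv.Perm (Fin (k + 1))).viaFintypeEmbedding τ).trans (σ j)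
  have hρ_mem (l) : F (fun j => ρ j (τ l)) := by
    have : (fun j => ρ j (τ l)) = fun j => σ j (t g (l + j)) := by
      funext j
      simp only [ρ, Equiv.trans_apply, Equiv.Perm.viaFintypeEmbedding_apply_image]
      rfl
    rw [this]
    exact hg l
  have hρ_notMem (i) (hi : i ∉ Set.range τ) : (fun j => ρ j i) = fun j => σ j i := by
    funext j
    simp only [ρ, Equiv.trans_apply,
      Equiv.Perm.viaFintypeEmbedding_apply_notMem_range _ _ hi]
  refine (hσ ρ (mem_univ _)).not_gt (card_lt_card ?_)
  refine (ssubset_iff_of_subset ?_).2 ⟨i₀, ?_, by simpa using hi₀⟩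
  · intro i hi
    by_cases h : i ∈ Set.range τ
    · obtain ⟨l, rfl⟩ := h
      simpa using hρ_mem l
    · simpa [hρ_notMem i h] using hi
  · exact mem_filter.2 ⟨mem_univ _, hρ_mem 0⟩

/-- The transversal edge selecting the vertex `Φ (j, f j)` from each part `j`. -/
def transversalEdge {ι κ V : Type*} [Fintype ι] [DecidableEq V] (Φ : ι × κ ≃ V) (f : ι → κ) :
    Finset V :=
  Finset.univ.image (fun j => Φ (j, f j))

lemma mem_transversalEdge {ι κ V : Type*} [Fintype ι] [DecidableEq V] {Φ : ι × κ ≃ V}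
    {f : ι → κ} {j : ι} {i : κ} : Φ (j, i) ∈ transversalEdge Φ f ↔ f j = i := by
  simp [transversalEdge]

lemma transversalEdge_injective {ι κ V : Type*} [Fintype ι] [DecidableEq V] (Φ : ι × κ ≃ V) :
    Function.Injective (transversalEdge Φ) := by
  intro f g h
  funext j
  exact (mem_transversalEdge.1 (h ▸ mem_transversalEdge.2 rfl : Φ (j, f j) ∈ _)).symm

lemma mem_linkOf_erase_iff {V : Type*} [DecidableEq V] {H : Finset (Finset V)} {e : Finset V}
    {v : V} (hv : v ∈ e) : e.erase v ∈ linkOf H v ↔ e ∈ H := by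
  simp only [linkOf, Finset.mem_image, Finset.mem_filter]
  constructor
  · rintro ⟨e', ⟨he', hv'⟩, h⟩
    rwa [← Finset.insert_erase hv, ← h, Finset.insert_erase hv']
  · exact fun he => ⟨e, ⟨he, hv⟩, rfl⟩

open Finset in
/-- The number of transversals of `G` through `v` that are not edges of `H` is at most the number
of sets in the link of `v` in `G` but not in `H`. -/
lemma card_transversal_notMem_le {ι κ V : Type*} [Fintype ι] [DecidableEq ι] [Fintype κ]
    [DecidableEq κ] [DecidableEq V] (Φ : ι × κ ≃ V) {G H : Finset (Finset V)}
    (hG : ∀ f, transversalEdge Φ f ∈ G) (j : ι) (i : κ) :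
    #{f : ι → κ | f j = i ∧ transversalEdge Φ f ∉ H} ≤
      #(linkOf G (Φ (j, i)) \ linkOf H (Φ (j, i))) := by
  refine card_le_card_of_injOn (fun f => (transversalEdge Φ f).erase (Φ (j, i))) ?_ ?_
  · intro f hf
    obtain ⟨hf, hfH⟩ : f j = i ∧ transversalEdge Φ f ∉ H := by simpa using hf
    have hv := (mem_transversalEdge (Φ := Φ)).2 hf
    simpa [mem_linkOf_erase_iff hv] using ⟨hG f, hfH⟩
  · intro f hf g hg h
    simp only [coe_filter, mem_univ, true_and, Set.mem_ofPred_eq] at hf hg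
    apply transversalEdge_injective Φ
    rw [← insert_erase ((mem_transversalEdge (Φ := Φ)).2 hf.1),
      ← insert_erase ((mem_transversalEdge (Φ := Φ)).2 hg.1)]
    exact congrArg _ h

/-- The vertex set of `calHk n k` split into `k + 1` parts of size `n / k`: the class `X` and the
`k` consecutive intervals of length `n / k` in `[n]`. -/
def partsEquiv {n k : ℕ} (h : k * (n / k) = n) :
    Fin (k + 1) × Fin (n / k) ≃ Fin (n / k) ⊕ Fin n where
  toFun p := Fin.cases (motive := fun _ => Fin (n / k) ⊕ Fin n) (Sum.inl p.2)
    (fun j => Sum.inr (finCongr h (finProdFinEquiv (j, p.2)))) p.1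
  invFun := Sum.elim (fun x => (0, x)) (fun y =>
    ((finProdFinEquiv.symm ((finCongr h).symm y)).1.succ,
      (finProdFinEquiv.symm ((finCongr h).symm y)).2))
  left_inv := by
    rintro ⟨j, i⟩
    cases j using Fin.cases with
    | zero => rfl
    | succ j =>
      simp only [Fin.cases_succ, Sum.elim_inr, Equiv.symm_apply_apply]
  right_inv := by
    rintro (x | y)
    · rfl
    · simp only [Sum.elim_inr, Fin.cases_succ, Prod.mk.eta, Equiv.apply_symm_apply]

lemma transversalEdge_mem_calHk {n k : ℕ} (hk : 2 ≤ k) (h : k * (n / k) = n)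
    (f : Fin (k + 1) → Fin (n / k)) : transversalEdge (partsEquiv h) f ∈ calHk n k := by
  let y : Fin k → Fin n := fun j => finCongr h (finProdFinEquiv (j, f j.succ))
  have hy : Function.Injective y := by
    intro a b hab
    have := finProdFinEquiv.injective ((finCongr h).injective hab)
    exact (Prod.mk.inj this).1
  have hval (j) : (y j : ℕ) = f j.succ + n / k * j := rfl
  simp only [calHk, Finset.mem_biUnion, Finset.mem_univ, true_and, Finset.mem_image,
    Finset.mem_filter, Finset.mem_powersetCard_univ]
  refine ⟨f 0, Finset.univ.image y, ⟨?_, ⟨y ⟨0, by omega⟩, by simp, ?_⟩,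
    ⟨y ⟨1, by omega⟩, by simp, ?_⟩⟩, ?_⟩
  · rw [Finset.card_image_of_injective _ hy, Finset.card_fin]
  · simp [hval]
  · simp [hval]
  · ext v
    simp only [transversalEdge, Finset.mem_insert, Finset.mem_image, Finset.mem_univ, true_and,
      exists_exists_eq_and, Fin.exists_fin_succ]
    exact or_congr eq_comm Iff.rfl

lemma missing_edges_lt_descFactorial {k m : ℕ} (hk : 2 ≤ k) (hm : 2 * k ≤ m) {α : ℝ}
    (hα0 : 0 < α)
    (hα1 : α < ((10 : ℝ) ^ k * (k : ℝ) ^ k * (Nat.factorial (k + 1) : ℝ))⁻¹) :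
    (k + 1) * ⌊α * (((k + 1) * m : ℕ) : ℝ) ^ k⌋₊ < (m - 1).descFactorial k := by
  have hk0 : (2 : ℝ) ≤ k := by exact_mod_cast hk
  have hmR : (2 * k : ℝ) ≤ m := by exact_mod_cast hm
  have hdesc : ((m : ℝ) - k) ^ k ≤ (m - 1).descFactorial k := by
    have h := Nat.pow_sub_le_descFactorial (m - 1) k
    rw [show m - 1 + 1 - k = m - k by omega] at h
    have h' : (((m - k : ℕ) : ℝ)) ^ k ≤ (m - 1).descFactorial k := by exact_mod_cast h
    rwa [Nat.cast_sub (by omega)] at h'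
  have hpos : 0 < ((m : ℝ) - k) ^ k := by
    apply pow_pos
    linarith
  have hα2 : α * ((10 : ℝ) ^ k * (k : ℝ) ^ k * (Nat.factorial (k + 1) : ℝ)) < 1 := by
    rw [← lt_inv_mul_iff₀' (by positivity), mul_one]
    exact hα1
  have hfact : (k + 1 : ℝ) ≤ (Nat.factorial (k + 1) : ℝ) := by
    exact_mod_cast Nat.self_le_factorial (k + 1)
  have hbase : (((k + 1) * m : ℕ) : ℝ) ^ k ≤ 10 ^ k * (k : ℝ) ^ k * ((m : ℝ) - k) ^ k := by
    rw [← mul_pow, ← mul_pow]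
    apply pow_le_pow_left₀ (by positivity)
    push_cast
    nlinarith
  have key : ((k : ℝ) + 1) * ⌊α * (((k + 1) * m : ℕ) : ℝ) ^ k⌋₊ < (m - 1).descFactorial k :=
    calc ((k : ℝ) + 1) * ⌊α * (((k + 1) * m : ℕ) : ℝ) ^ k⌋₊
        ≤ (Nat.factorial (k + 1) : ℝ) * (α * (10 ^ k * (k : ℝ) ^ k * ((m : ℝ) - k) ^ k)) := by
          gcongr
          exact (Nat.floor_le (by positivity)).trans (by gcongr)
      _ = α * ((10 : ℝ) ^ k * (k : ℝ) ^ k * (Nat.factorial (k + 1) : ℝ)) * ((m : ℝ) - k) ^ k := by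
          ring
      _ < ((m : ℝ) - k) ^ k := mul_lt_of_lt_one_left hpos hα2
      _ ≤ _ := hdesc
  exact_mod_cast key

/-- Let `k ≥ 2`, `0 < α < (10^k · k^k · (k+1)!)⁻¹`, and let `n ≡ 0 (mod k)`
be sufficiently large in terms of `α`. If `H` is a balanced `(1,k)`-partite
`(k+1)`-graph on the vertex set of `𝓗_k(n, n/k)` (same partition classes) in which
every vertex is `α`-good with respect to `𝓗_k(n, n/k)` (i.e.
`|N_{𝓗}(v) \ N_H(v)| ≤ α · |V|^k`), then `H` has a perfect matching. -/
theorem perfect_matching_of_all_good (k : ℕ) (hk : 2 ≤ k) (α : ℝ)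
    (hα0 : 0 < α)
    (hα1 : α < ((10 : ℝ) ^ k * (k : ℝ) ^ k * (Nat.factorial (k + 1) : ℝ))⁻¹) :
    ∃ N : ℕ, ∀ n : ℕ, N ≤ n → k ∣ n →
    ∀ H : Finset (Finset (Fin (n / k) ⊕ Fin n)),
      (∀ e ∈ H, ∃ (x : Fin (n / k)) (s : Finset (Fin n)),
        s.card = k ∧ e = insert (Sum.inl x) (s.image Sum.inr)) →
      (∀ v : Fin (n / k) ⊕ Fin n,
        (((linkOf (calHk n k) v) \ (linkOf H v)).card : ℝ)
          ≤ α * ((n + n / k : ℕ) : ℝ) ^ k) →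
      ∃ M ⊆ H, (M : Set (Finset (Fin (n / k) ⊕ Fin n))).Pairwise (fun a b => Disjoint a b) ∧
        (∀ v : Fin (n / k) ⊕ Fin n, ∃ e ∈ M, v ∈ e) := by
  refine ⟨2 * k * k, fun n hn hkn H _ hgood => ?_⟩
  have h : k * (n / k) = n := Nat.mul_div_cancel' hkn
  have hm : 2 * k ≤ n / k := (Nat.le_div_iff_mul_le (by omega)).2 hn
  have hV : n + n / k = (k + 1) * (n / k) := by
    rw [add_mul, h, one_mul]
  obtain ⟨σ, hσ⟩ := exists_perms_forall_of_card_le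
    (fun f => transversalEdge (partsEquiv h) f ∈ H)
    (fun j i => (card_transversal_notMem_le (partsEquiv h)
      (transversalEdge_mem_calHk hk h) j i).trans
        (Nat.le_floor (hV ▸ hgood (partsEquiv h (j, i)))))
    (missing_edges_lt_descFactorial hk hm hα0 hα1)
  refine ⟨Finset.univ.image (fun i => transversalEdge (partsEquiv h) (fun j => σ j i)),
    ?_, ?_, ?_⟩
  · simpa [Finset.image_subset_iff] using hσ
  · intro a ha b hb hab
    simp only [Finset.coe_image, Finset.coe_univ, Set.image_univ, Set.mem_range] at ha hb
    obtain ⟨i, rfl⟩ := ha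
    obtain ⟨i', rfl⟩ := hb
    refine Finset.disjoint_left.2 fun v hv hv' => hab ?_
    obtain ⟨⟨j, w⟩, rfl⟩ := (partsEquiv h).surjective v
    rw [mem_transversalEdge] at hv hv'
    rw [(σ j).injective (hv.trans hv'.symm)]
  · intro v
    obtain ⟨⟨j, w⟩, rfl⟩ := (partsEquiv h).surjective v
    exact ⟨_, Finset.mem_image_of_mem _ (Finset.mem_univ ((σ j).symm w)),
      mem_transversalEdge.2 (by simp)⟩
end

section
/- Let n, t, k be positive integers such that n > 2k^4 t. For each i ∈ [t], let G_i ⊆ binom([n],k) be a k-graph with δ_1(G_i) > binom(n-1,k-1) - binom(n-t,k-1). Then the family {G_1, ..., G_t} admits a rainbow matching, i.e., there exist pairwise disjoint edges e_1, ..., e_t with e_i ∈ G_i for each i. -/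
/-- Each of the `s` unit steps from `a + s` down to `a` lowers `choose · (b + 1)` by at least
`a.choose b`. -/
lemma choose_succ_add_mul_le (a b s : ℕ) :
    a.choose (b + 1) + s * a.choose b ≤ (a + s).choose (b + 1) := by
  induction s with
  | zero => simp
  | succ s ih =>
    have h : a.choose b ≤ (a + s).choose b := Nat.choose_le_choose b (Nat.le_add_right a s)
    rw [← Nat.add_assoc, Nat.choose_succ_succ' (a + s) b]
    linarith [Nat.succ_mul s (a.choose b)]

/-- Each of the `r` unit steps from `a + r + 1` down to `a + 1` lowers `choose · (b + 1)` by at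
most `(a + r).choose b`. -/
lemma choose_succ_le_add_mul (a b r : ℕ) :
    (a + r + 1).choose (b + 1) ≤ (a + 1).choose (b + 1) + r * (a + r).choose b := by
  induction r with
  | zero => simp
  | succ r ih =>
    have h : (a + r).choose b ≤ (a + r + 1).choose b := Nat.choose_le_choose b (Nat.le_succ _)
    rw [← Nat.add_assoc, Nat.choose_succ_succ' (a + r + 1) b]
    nlinarith [Nat.mul_le_mul_left r h]

/-- Decreasing the upper index slightly loses at most a factor of two. -/
lemma choose_le_two_mul_choose (a r m : ℕ) (h : 2 * r * m ≤ a + r + 1) :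
    (a + r + 1).choose m ≤ 2 * (a + 1).choose m := by
  cases m with
  | zero => simp
  | succ b =>
    have h₁ := choose_succ_le_add_mul a b r
    have h₂ := Nat.add_one_mul_choose_eq (a + r) b
    have h₃ := Nat.mul_le_mul_right ((a + r + 1).choose (b + 1)) h
    have h₄ : (a + r + 1) * (2 * (r * (a + r).choose b)) ≤
        (a + r + 1) * (a + r + 1).choose (b + 1) := by
      calc (a + r + 1) * (2 * (r * (a + r).choose b))
          = 2 * r * ((a + r + 1) * (a + r).choose b) := by ring
        _ = 2 * r * (b + 1) * (a + r + 1).choose (b + 1) := by rw [h₂]; ring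
        _ ≤ _ := h₃
    have h₅ := Nat.le_of_mul_le_mul_left h₄ (Nat.succ_pos _)
    omega

section RainbowMatching

variable {α ι : Type*} [DecidableEq α] [DecidableEq ι]

/-- A rainbow matching of the families `G i`, `i ∈ I`. -/
def HasRainbowMatching (I : Finset ι) (G : ι → Finset (Finset α)) : Prop :=
  ∃ e : ι → Finset α, (∀ i ∈ I, e i ∈ G i) ∧
    ∀ i ∈ I, ∀ j ∈ I, i ≠ j → Disjoint (e i) (e j)

/-- A rainbow matching extends to one more family as soon as that family has an edge avoiding the
vertices already covered. -/
lemma exists_rainbowMatching_insert {I : Finset ι} {a : ι} (ha : a ∉ I)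
    {G : ι → Finset (Finset α)} {e : ι → Finset α} (he : ∀ i ∈ I, e i ∈ G i)
    (hd : ∀ i ∈ I, ∀ j ∈ I, i ≠ j → Disjoint (e i) (e j))
    {f : Finset α} (hf : f ∈ G a) (hfd : Disjoint f (I.biUnion e)) :
    HasRainbowMatching (insert a I) G := by
  rw [Finset.disjoint_biUnion_right] at hfd
  refine ⟨Function.update e a f, ?_, ?_⟩
  · intro i hi
    by_cases h : i = a
    · subst h; simpa using hf
    · simpa [h] using he i (Finset.mem_of_mem_insert_of_ne hi h)
  · intro i hi j hj hij
    by_cases h : i = a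
    · subst h
      simpa [hij.symm] using hfd j (Finset.mem_of_mem_insert_of_ne hj hij.symm)
    · have hi' := Finset.mem_of_mem_insert_of_ne hi h
      by_cases h' : j = a
      · subst h'
        simpa [h] using (hfd i hi').symm
      · simpa [h, h'] using hd i hi' j (Finset.mem_of_mem_insert_of_ne hj h') hij

/-- The greedy construction of a rainbow matching. -/
lemma hasRainbowMatching_of_greedy {k N : ℕ} (G : ι → Finset (Finset α)) (I : Finset ι)
    (hk : ∀ i ∈ I, ∀ e ∈ G i, e.card = k) (hN : I.card * k ≤ N)
    (h : ∀ i ∈ I, ∀ S : Finset α, S.card + k ≤ N → ∃ e ∈ G i, Disjoint e S) :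
    HasRainbowMatching I G := by
  induction I using Finset.induction_on with
  | empty => exact ⟨fun _ => ∅, by simp, by simp⟩
  | insert a I ha ih =>
    rw [Finset.card_insert_of_notMem ha, Nat.succ_mul] at hN
    obtain ⟨e, he, hd⟩ := ih (fun i hi => hk i (Finset.mem_insert_of_mem hi)) (by omega)
      (fun i hi => h i (Finset.mem_insert_of_mem hi))
    have hcard : (I.biUnion e).card ≤ I.card * k := Finset.card_biUnion_le_card_mul _ _ _
      fun i hi => (hk i (Finset.mem_insert_of_mem hi) _ (he i hi)).le
    obtain ⟨f, hf, hfd⟩ := h a (Finset.mem_insert_self _ _) (I.biUnion e) (by omega)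
    exact exists_rainbowMatching_insert ha he hd hf hfd

/-- If every vertex of `S` lies in at most `D` edges and there are more than `S.card * D` edges,
then some edge avoids `S`. -/
lemma exists_disjoint_of_card_mul_lt {G : Finset (Finset α)} {S : Finset α} {D : ℕ}
    (hD : ∀ u ∈ S, (G.filter (fun e => u ∈ e)).card ≤ D) (h : S.card * D < G.card) :
    ∃ e ∈ G, Disjoint e S := by
  by_contra! hcon
  have hsub : G ⊆ S.biUnion (fun u => G.filter (fun e => u ∈ e)) := by
    intro e he
    obtain ⟨u, hu, huS⟩ := Finset.not_disjoint_iff.mp (hcon e he)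
    exact Finset.mem_biUnion.mpr ⟨u, huS, Finset.mem_filter.mpr ⟨he, hu⟩⟩
  have := (Finset.card_le_card hsub).trans (Finset.card_biUnion_le_card_mul _ _ _ hD)
  omega

/-- The number of `(m + 2)`-subsets of `V` containing two given vertices. -/
lemma card_filter_mem_mem_le {V : Finset α} {G : Finset (Finset α)} {m : ℕ}
    (hG : ∀ e ∈ G, e ⊆ V ∧ e.card = m + 2) {u v : α} (huv : u ≠ v) (hu : u ∈ V) (hv : v ∈ V) :
    ((G.filter (fun e => v ∈ e)).filter (fun e => u ∈ e)).card ≤ (V.card - 2).choose m := by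
  have hV : ((V.erase v).erase u).card = V.card - 2 := by
    rw [Finset.card_erase_of_mem (Finset.mem_erase.mpr ⟨huv, hu⟩), Finset.card_erase_of_mem hv]
    omega
  rw [← hV, ← Finset.card_powersetCard]
  refine Finset.card_le_card_of_injOn (fun e => (e.erase v).erase u) ?_ ?_
  · intro e he
    simp only [Finset.coe_filter, Finset.mem_filter, Set.mem_ofPred_eq] at he
    obtain ⟨⟨heG, hve⟩, hue⟩ := he
    refine Finset.mem_coe.mpr (Finset.mem_powersetCard.mpr
      ⟨Finset.erase_subset_erase _ (Finset.erase_subset_erase _ (hG e heG).1), ?_⟩)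
    rw [Finset.card_erase_of_mem (Finset.mem_erase.mpr ⟨huv, hue⟩),
      Finset.card_erase_of_mem hve, (hG e heG).2]
    omega
  · intro e he f hf hef
    simp only [Finset.coe_filter, Finset.mem_filter, Set.mem_ofPred_eq] at he hf
    have := congrArg (fun x => insert v (insert u x)) hef
    simpa [Finset.insert_erase, Finset.mem_erase, huv, he.1.2, he.2, hf.1.2, hf.2] using this

/-- The degree sum of a `k`-uniform family. -/
lemma sum_card_filter_mem_eq {V : Finset α} {G : Finset (Finset α)} {k : ℕ}
    (hG : ∀ e ∈ G, e ⊆ V ∧ e.card = k) :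
    ∑ v ∈ V, (G.filter (fun e => v ∈ e)).card = G.card * k := by
  refine (Finset.sum_card_bipartiteAbove_eq_sum_card_bipartiteBelow
    (s := V) (t := G) (fun v e => v ∈ e)).trans ?_
  refine Finset.sum_const_nat fun e he => ?_
  rw [Finset.bipartiteBelow, Finset.filter_mem_eq_inter,
    Finset.inter_eq_right.mpr (hG e he).1, (hG e he).2]

/-- The rainbow matching theorem for `(m + 2)`-uniform families on an arbitrary vertex set. -/
lemma hasRainbowMatching_of_degree (m : ℕ) (t : ℕ) : ∀ (I : Finset ι) (V : Finset α)
    (G : ι → Finset (Finset α)), I.card = t → 2 * (m + 2) ^ 4 * t < V.card →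
    (∀ i ∈ I, ∀ e ∈ G i, e ⊆ V ∧ e.card = m + 2) →
    (∀ i ∈ I, ∀ v ∈ V, (V.card - 1).choose (m + 1) <
      ((G i).filter (fun e => v ∈ e)).card + (V.card - t).choose (m + 1)) →
    HasRainbowMatching I G := by
  induction t with
  | zero =>
    intro I V G hI _ _ _
    rw [Finset.card_eq_zero.mp hI]
    exact ⟨fun _ => ∅, by simp, by simp⟩
  | succ s ih =>
    intro I V G hI hV hG hδ
    have hVs : 2 * (s + 1) < V.card := by
      refine lt_of_le_of_lt ?_ hV
      have : 0 < (m + 2) ^ 4 := by positivity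
      exact Nat.mul_le_mul_right _ (by omega)
    by_cases hbig : ∃ i ∈ I, ∃ v ∈ V,
        s * (m + 2) * (V.card - 2).choose m < ((G i).filter (fun e => v ∈ e)).card
    · obtain ⟨i, hi, v, hv, hdeg⟩ := hbig
      have hVe : (V.erase v).card = V.card - 1 := Finset.card_erase_of_mem hv
      have hIe : (I.erase i).card = s := by rw [Finset.card_erase_of_mem hi, hI]; rfl
      obtain ⟨e, he, hd⟩ := ih (I.erase i) (V.erase v)
        (fun j => (G j).filter (fun e => v ∉ e)) hIe
        (by
          rw [hVe]
          have : 0 < (m + 2) ^ 4 := by positivity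
          have h2 : 2 * (m + 2) ^ 4 * (s + 1) = 2 * (m + 2) ^ 4 * s + 2 * (m + 2) ^ 4 := by ring
          omega)
        (by
          intro j hj e he
          obtain ⟨heG, hve⟩ := Finset.mem_filter.mp he
          have := hG j (Finset.mem_of_mem_erase hj) e heG
          exact ⟨Finset.subset_erase.mpr ⟨this.1, hve⟩, this.2⟩)
        (by
          intro j hj u hu
          obtain ⟨huv, huV⟩ := Finset.mem_erase.mp hu
          have hjI := Finset.mem_of_mem_erase hj
          have h₁ := hδ j hjI u huV
          have h₂ := card_filter_mem_mem_le (hG j hjI) huv.symm hv huV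
          have h₃ := Finset.card_filter_add_card_filter_not (s := (G j).filter (fun e => u ∈ e))
            (fun e => v ∈ e)
          rw [Finset.filter_comm (s := G j) (fun e => u ∈ e) (fun e => v ∉ e)] at h₃
          have h₄ : (V.card - 1).choose (m + 1) =
              (V.card - 2).choose m + (V.card - 2).choose (m + 1) := by
            rw [← Nat.choose_succ_succ']
            congr 1
            omega
          rw [hVe, show V.card - 1 - 1 = V.card - 2 by omega,
            show V.card - 1 - s = V.card - (s + 1) by omega]
          omega)
      have he' : ∀ j ∈ I.erase i, e j ∈ G j ∧ v ∉ e j := fun j hj =>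
        Finset.mem_filter.mp (he j hj)
      have hS : ((I.erase i).biUnion e).card ≤ s * (m + 2) := by
        rw [← hIe]
        exact Finset.card_biUnion_le_card_mul _ _ _ fun j hj =>
          (hG j (Finset.mem_of_mem_erase hj) _ (he' j hj).1).2.le
      obtain ⟨f, hf, hfd⟩ := exists_disjoint_of_card_mul_lt
        (G := (G i).filter (fun e => v ∈ e)) (S := (I.erase i).biUnion e)
        (D := (V.card - 2).choose m)
        (by
          intro u hu
          obtain ⟨j, hj, huj⟩ := Finset.mem_biUnion.mp hu
          refine card_filter_mem_mem_le (hG i hi) ?_ ?_ hv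
          · rintro rfl
            exact (he' j hj).2 huj
          · exact (hG j (Finset.mem_of_mem_erase hj) _ (he' j hj).1).1 huj)
        ((Nat.mul_le_mul_right _ hS).trans_lt hdeg)
      rw [← Finset.insert_erase hi]
      exact exists_rainbowMatching_insert (Finset.notMem_erase i I) (fun j hj => (he' j hj).1) hd
        (Finset.mem_of_mem_filter f hf) hfd
    · push Not at hbig
      refine hasRainbowMatching_of_greedy (k := m + 2) (N := (s + 1) * (m + 2)) G I
        (fun i hi e he => (hG i hi e he).2) (by rw [hI]) ?_
      intro i hi S hS
      suffices h : ∃ e ∈ G i, Disjoint e (S ∩ V) by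
        obtain ⟨e, he, hd⟩ := h
        refine ⟨e, he, Finset.disjoint_left.mpr fun u hu huS => ?_⟩
        exact Finset.disjoint_left.mp hd hu
          (Finset.mem_inter.mpr ⟨huS, (hG i hi e he).1 hu⟩)
      refine exists_disjoint_of_card_mul_lt (D := s * (m + 2) * (V.card - 2).choose m)
        (fun u hu => hbig i hi u (Finset.mem_inter.mp hu).2) ?_
      have hS' : (S ∩ V).card ≤ s * (m + 2) := by
        have := Finset.card_le_card (Finset.inter_subset_left (s₁ := S) (s₂ := V))
        rw [Nat.succ_mul] at hS
        omega
      refine (Nat.mul_le_mul_right _ hS').trans_lt ?_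
      have hdeg : ∀ v ∈ V, s * (V.card - (s + 1)).choose m + 1 ≤
          ((G i).filter (fun e => v ∈ e)).card := by
        intro v hv
        have h₁ := choose_succ_add_mul_le (V.card - (s + 1)) m s
        rw [show V.card - (s + 1) + s = V.card - 1 by omega] at h₁
        have h₂ := hδ i hi v hv
        omega
      have hsum := Finset.card_nsmul_le_sum V _ _ hdeg
      rw [sum_card_filter_mem_eq (hG i hi), smul_eq_mul] at hsum
      have hchoose : s * (V.card - 2).choose m ≤ s * (2 * (V.card - (s + 1)).choose m) := by
        cases s with
        | zero => simp
        | succ r =>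
          refine Nat.mul_le_mul_left _ ?_
          have hcard : 2 * r * m + r + 4 ≤ V.card := by
            have : m + 2 ≤ (m + 2) ^ 4 := Nat.le_self_pow (by norm_num) _
            nlinarith [Nat.mul_le_mul_right (r + 1 + 1) this]
          obtain ⟨a, ha⟩ : ∃ a, V.card = a + r + 3 := ⟨V.card - r - 3, by omega⟩
          rw [ha, show a + r + 3 - 2 = a + r + 1 by omega,
            show a + r + 3 - (r + 1 + 1) = a + 1 by omega]
          exact choose_le_two_mul_choose a r m (by omega)
      refine lt_of_mul_lt_mul_right (a := m + 2) ?_ (Nat.zero_le _)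
      refine lt_of_lt_of_le ?_ hsum
      set c := (V.card - 2).choose m
      set c' := (V.card - (s + 1)).choose m
      have hn : s * 2 * (m + 2) ^ 3 ≤ V.card := by
        have : (m + 2) ^ 3 ≤ (m + 2) ^ 4 := Nat.pow_le_pow_right (by omega) (by norm_num)
        calc s * 2 * (m + 2) ^ 3 ≤ (s + 1) * 2 * (m + 2) ^ 4 :=
              Nat.mul_le_mul (by omega) this
          _ = 2 * (m + 2) ^ 4 * (s + 1) := by ring
          _ ≤ V.card := hV.le
      calc s * (m + 2) * (s * (m + 2) * c) * (m + 2)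
          = s * (m + 2) ^ 3 * (s * c) := by ring
        _ ≤ s * (m + 2) ^ 3 * (s * (2 * c')) := Nat.mul_le_mul_left _ hchoose
        _ = s * 2 * (m + 2) ^ 3 * (s * c') := by ring
        _ ≤ V.card * (s * c') := Nat.mul_le_mul_right _ hn
        _ < V.card * (s * c' + 1) := Nat.mul_lt_mul_of_pos_left (Nat.lt_succ_self _) (by omega)

end RainbowMatching

/-- Lu–Yu–Yuan: Let `n, t, k` be positive integers with `n > 2k⁴t`.
If `G₁,…,G_t ⊆ C([n],k)` satisfy `δ₁(Gᵢ) > C(n-1,k-1) - C(n-t,k-1)` for all `i`,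
then `{G₁,…,G_t}` admits a rainbow matching. -/
theorem rainbow_matching_LYY (n t k : ℕ) (ht : 1 ≤ t) (hk : 1 ≤ k)
    (hn : 2 * k ^ 4 * t < n)
    (G : Fin t → Finset (Finset (Fin n)))
    (hGk : ∀ i : Fin t, ∀ e ∈ G i, e.card = k)
    (hδ : ∀ (i : Fin t) (v : Fin n),
      Nat.choose (n - 1) (k - 1) - Nat.choose (n - t) (k - 1)
        < ((G i).filter (fun e => v ∈ e)).card) :
    ∃ e : Fin t → Finset (Fin n),
      (∀ i, e i ∈ G i) ∧ (∀ i j, i ≠ j → Disjoint (e i) (e j)) := by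
  obtain _ | _ | m := k
  · omega
  · have hG : ∀ i v, ({v} : Finset (Fin n)) ∈ G i := by
      intro i v
      obtain ⟨e, he⟩ := Finset.card_pos.mp ((Nat.zero_le _).trans_lt (hδ i v))
      obtain ⟨heG, hv⟩ := Finset.mem_filter.mp he
      obtain ⟨w, rfl⟩ := Finset.card_eq_one.mp (hGk i e heG)
      rwa [Finset.mem_singleton.mp hv]
    refine ⟨fun i => {Fin.castLE (by omega) i}, fun i => hG i _, fun i j hij => ?_⟩
    simpa using hij
  · obtain ⟨e, he, hd⟩ := hasRainbowMatching_of_degree m t (Finset.univ : Finset (Fin t))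
      (Finset.univ : Finset (Fin n)) G (by simp) (by simpa using hn)
      (fun i _ e he => ⟨Finset.subset_univ e, hGk i e he⟩)
      (fun i _ v _ => by
        have := hδ i v
        simp only [Finset.card_univ, Fintype.card_fin, Nat.add_sub_cancel] at this ⊢
        omega)
    exact ⟨e, fun i => he i (Finset.mem_univ i),
      fun i j => hd i (Finset.mem_univ i) j (Finset.mem_univ j)⟩
end

section
/- Let k ≥ 3 be an integer and 0 < b < 1/k a constant, and let n be sufficiently large in terms of k and b. Let H be a (1,k)-partite (k+1)-graph with partition classes X, [n], |X| = n/k, such that δ_1(N_H(x)) > (1/2 + b)·binom(n-1,k-1) for every x ∈ X. Then for every balanced (k+1)-subset R of V(H) (i.e., |R ∩ X| = 1 and |R ∩ [n]| = k), the number of R-absorbing sets is at least b^k · binom(n,k)^{k+1} / (2·(k^2)!). -/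
/-- A perfect matching of the subhypergraph of `H` induced on the vertex set `Q`:
a set of pairwise disjoint edges of `H`, each contained in `Q`, covering `Q`. -/
def HasPM {V : Type*} [DecidableEq V] (H : Finset (Finset V)) (Q : Finset V) : Prop :=
  ∃ M ⊆ H, (∀ e ∈ M, e ⊆ Q) ∧
    (M : Set (Finset V)).Pairwise (fun a b => Disjoint a b) ∧
    (∀ v ∈ Q, ∃ e ∈ M, v ∈ e)

section AbsorbingSets

open Finset

theorem card_powersetCard_filter_mem_le {V : Type*} [Fintype V] [DecidableEq V] (s : ℕ) (v : V) :
    #{S ∈ powersetCard s (univ : Finset V) | v ∈ S} ≤ (Fintype.card V - 1).choose (s - 1) := by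
  have h : #(powersetCard (s - 1) ((univ : Finset V).erase v)) =
      (Fintype.card V - 1).choose (s - 1) := by
    rw [card_powersetCard, card_erase_of_mem (mem_univ v), card_univ]
  rw [← h]
  refine card_le_card_of_injOn (fun S => S.erase v) ?_ ?_
  · intro S hS
    simp only [coe_filter, mem_powersetCard, Set.mem_ofPred_eq, mem_coe] at hS ⊢
    exact ⟨erase_subset_erase v (subset_univ S), by rw [card_erase_of_mem hS.2, hS.1.2]⟩
  · intro S hS T hT hST
    simp only [coe_filter, Set.mem_ofPred_eq] at hS hT
    have := congrArg (insert v) hST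
    simpa [insert_erase hS.2, insert_erase hT.2] using this

theorem card_powersetCard_filter_not_disjoint_le {V : Type*} [Fintype V] [DecidableEq V]
    (s : ℕ) (Z : Finset V) :
    #{S ∈ powersetCard s (univ : Finset V) | ¬ Disjoint S Z} ≤
      #Z * (Fintype.card V - 1).choose (s - 1) := by
  have hsub : {S ∈ powersetCard s (univ : Finset V) | ¬ Disjoint S Z} ⊆
      Z.biUnion fun z => {S ∈ powersetCard s (univ : Finset V) | z ∈ S} := by
    intro S hS
    obtain ⟨hS, hZ⟩ := mem_filter.1 hS
    obtain ⟨z, hzS, hzZ⟩ := not_disjoint_iff.1 hZ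
    exact mem_biUnion.2 ⟨z, hzZ, mem_filter.2 ⟨hS, hzS⟩⟩
  exact (card_le_card hsub).trans
    (card_biUnion_le_card_mul _ _ _ fun z _ => card_powersetCard_filter_mem_le s z)

/-- Greedy choice: sequences of candidates compatible with each other and with `F`. -/
theorem pow_le_card_compatible_tuples {β : Type*} [Fintype β] [DecidableEq β]
    (r : β → β → Prop) [DecidableRel r] (hr : ∀ a a', r a a' → r a' a) (B : Finset β) (K : ℕ)
    (c : ℝ) (hc : 0 ≤ c) (j : ℕ) :
    ∀ (G : Fin j → Finset β) (F : Finset β), (∀ i, G i ⊆ B) → F ⊆ B → #F + j ≤ K →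
      (∀ i, ∀ F' ⊆ B, #F' ≤ K → c ≤ (#{q ∈ G i | ∀ f ∈ F', r q f} : ℝ)) →
      c ^ j ≤ (#{p : Fin j → β | (∀ i, p i ∈ G i ∧ ∀ f ∈ F, r (p i) f) ∧
        ∀ i i', i ≠ i' → r (p i) (p i')} : ℝ) := by
  induction j with
  | zero =>
    intro G F _ _ _ _
    simp
  | succ j ih =>
    intro G F hG hF hK hcount
    set C : Finset β := {q ∈ G 0 | ∀ f ∈ F, r q f} with hC
    set T : β → Finset (Fin j → β) := fun q =>
      {p | (∀ i, p i ∈ G i.succ ∧ ∀ f ∈ insert q F, r (p i) f) ∧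
        ∀ i i', i ≠ i' → r (p i) (p i')} with hT
    have hTq : ∀ q ∈ C, c ^ j ≤ (#(T q) : ℝ) := by
      intro q hq
      have hqB : q ∈ B := hG 0 (mem_filter.1 hq).1
      refine ih (fun i => G i.succ) (insert q F) (fun i => hG _) (insert_subset hqB hF) ?_
        (fun i => hcount _)
      have := card_insert_le q F
      omega
    have hCc : c ≤ (#C : ℝ) := hcount 0 F hF (by omega)
    have hle : #(C.sigma T) ≤ #{p : Fin (j + 1) → β | (∀ i, p i ∈ G i ∧ ∀ f ∈ F, r (p i) f) ∧
        ∀ i i', i ≠ i' → r (p i) (p i')} := by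
      refine card_le_card_of_injOn (fun a => Fin.cons a.1 a.2) ?_ ?_
      · rintro ⟨q, p⟩ h
        simp only [coe_sigma, Set.mem_sigma_iff, mem_coe, hC, hT, mem_filter, mem_univ, true_and,
          mem_insert, forall_eq_or_imp] at h
        obtain ⟨⟨h1, h2⟩, h3, h4⟩ := h
        simp only [coe_filter, mem_univ, true_and, Set.mem_ofPred_eq, Fin.forall_fin_succ,
          Fin.cons_zero, Fin.cons_succ]
        refine ⟨⟨⟨h1, h2⟩, fun i => ⟨(h3 i).1, (h3 i).2.2⟩⟩, ⟨fun h => (h rfl).elim,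
          fun i _ => hr _ _ (h3 i).2.1⟩, fun i => ⟨fun _ => (h3 i).2.1, fun i' hi => h4 i i' ?_⟩⟩
        rintro rfl
        exact hi rfl
      · rintro ⟨q, p⟩ _ ⟨q', p'⟩ _ h
        obtain ⟨rfl, rfl⟩ := Fin.cons_injective2 h
        rfl
    calc c ^ (j + 1) = c * c ^ j := pow_succ' c j
      _ ≤ #C * c ^ j := by gcongr
      _ = ∑ q ∈ C, c ^ j := by rw [sum_const, nsmul_eq_mul]
      _ ≤ ∑ q ∈ C, (#(T q) : ℝ) := sum_le_sum hTq
      _ = (#(C.sigma T) : ℝ) := by rw [card_sigma]; push_cast; rfl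
      _ ≤ _ := by exact_mod_cast hle

theorem card_disjoint_tuples_mul_le {X V : Type*} [Fintype X] [Fintype V] [DecidableEq X]
    [DecidableEq V] (A : Finset X) (s j : ℕ) :
    ∀ U : Finset V, #U = j * s →
      #{p : Fin j → X × Finset V | (∀ i, (p i).1 ∈ A ∧ (p i).2 ⊆ U ∧ #(p i).2 = s) ∧
        ∀ i i', i ≠ i' → Disjoint (p i).2 (p i').2} * s.factorial ^ j ≤
      #A ^ j * (j * s).factorial := by
  induction j with
  | zero =>
    intro U _
    simp
  | succ j ih =>
    intro U hU
    set C : Finset (X × Finset V) := A ×ˢ powersetCard s U with hC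
    set P : Finset (Fin (j + 1) → X × Finset V) :=
      {p | (∀ i, (p i).1 ∈ A ∧ (p i).2 ⊆ U ∧ #(p i).2 = s) ∧
        ∀ i i', i ≠ i' → Disjoint (p i).2 (p i').2} with hP
    set T : X × Finset V → Finset (Fin j → X × Finset V) := fun q =>
      {p | (∀ i, (p i).1 ∈ A ∧ (p i).2 ⊆ U \ q.2 ∧ #(p i).2 = s) ∧
        ∀ i i', i ≠ i' → Disjoint (p i).2 (p i').2} with hT
    have hle : #P ≤ #(C.sigma T) := by
      refine card_le_card_of_injOn (fun p => ⟨p 0, Fin.tail p⟩) ?_ ?_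
      · intro p h
        simp only [hP, coe_filter, mem_univ, true_and, Set.mem_ofPred_eq] at h
        simp only [coe_sigma, Set.mem_sigma_iff, mem_coe, hC, hT, mem_filter, mem_univ, true_and,
          mem_product, mem_powersetCard, Fin.tail]
        refine ⟨⟨(h.1 0).1, (h.1 0).2⟩, fun i => ⟨(h.1 _).1, subset_sdiff.2 ⟨(h.1 _).2.1, ?_⟩,
          (h.1 _).2.2⟩, fun i i' hi => h.2 _ _ (by simpa using hi)⟩
        exact h.2 _ _ (Fin.succ_ne_zero i)
      · intro p _ p' _ h
        simp only [Sigma.mk.injEq, heq_eq_eq] at h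
        rw [← Fin.cons_self_tail p, ← Fin.cons_self_tail p', h.1, h.2]
    have hTq : ∀ q ∈ C, #(T q) * s.factorial ^ j ≤ #A ^ j * (j * s).factorial := by
      intro q hq
      simp only [hC, mem_product, mem_powersetCard] at hq
      refine ih (U \ q.2) ?_
      rw [card_sdiff_of_subset hq.2.1, hU, hq.2.2, add_mul, one_mul, Nat.add_sub_cancel]
    have hch : ((j + 1) * s).choose s * s.factorial * (j * s).factorial =
        ((j + 1) * s).factorial := by
      have := Nat.choose_mul_factorial_mul_factorial (n := (j + 1) * s) (k := s)
        (Nat.le_mul_of_pos_left s j.succ_pos)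
      rwa [show (j + 1) * s - s = j * s by rw [add_mul, one_mul, Nat.add_sub_cancel]] at this
    calc #P * s.factorial ^ (j + 1)
        ≤ #(C.sigma T) * s.factorial ^ (j + 1) := Nat.mul_le_mul_right _ hle
      _ = (∑ q ∈ C, #(T q) * s.factorial ^ j) * s.factorial := by
        rw [card_sigma, ← sum_mul, pow_succ, mul_assoc]
      _ ≤ (∑ q ∈ C, #A ^ j * (j * s).factorial) * s.factorial :=
        Nat.mul_le_mul_right _ (sum_le_sum hTq)
      _ = #A ^ (j + 1) * (((j + 1) * s).choose s * s.factorial * (j * s).factorial) := by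
        rw [sum_const, smul_eq_mul, hC, card_product, card_powersetCard, hU]
        ring
      _ = _ := by rw [hch]

theorem eventually_choose_bounds (k : ℕ) (hk : 3 ≤ k) (b : ℝ) (hb0 : 0 < b) :
    ∃ N : ℕ, ∀ n : ℕ, N ≤ n → k ≤ n ∧
      (k : ℝ) * (n - 1).choose (k - 1) ≤ b * n.choose k ∧
      0 ≤ 2 * b * (n - 1).choose (k - 1) - (k ^ 2 + k + 1) * (n - 1).choose (k - 2) ∧
      b * n.choose k ≤ ((n / k : ℕ) - (k + 1) : ℝ) *
        (2 * b * (n - 1).choose (k - 1) - (k ^ 2 + k + 1) * (n - 1).choose (k - 2)) := by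
  obtain ⟨N₁, hN₁⟩ := exists_nat_ge ((k : ℝ) ^ 2 / b)
  obtain ⟨N₂, hN₂⟩ := exists_nat_ge (2 * ((k : ℝ) ^ 2 + k + 1) * k / b)
  refine ⟨N₁ + (N₂ + k) + 3 * k * (k + 2), fun n hn => ?_⟩
  have hkn : k ≤ n := by nlinarith
  obtain ⟨l, rfl⟩ : ∃ l, k = l + 2 := ⟨k - 2, by omega⟩
  obtain ⟨a, rfl⟩ : ∃ a, n = a + 1 := ⟨n - 1, by omega⟩
  have e1 : (a + 1) * a.choose (l + 1) = (a + 1).choose (l + 2) * (l + 2) :=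
    Nat.add_one_mul_choose_eq a (l + 1)
  have e2 : a.choose (l + 1) * (l + 1) = a.choose l * (a - l) := Nat.choose_succ_right_eq a l
  rw [Nat.add_sub_cancel, Nat.add_sub_cancel, show l + 2 - 1 = l + 1 by omega]
  have e1' : ((a : ℝ) + 1) * a.choose (l + 1) = (a + 1).choose (l + 2) * (l + 2) := by
    exact_mod_cast e1
  have e2' : (a.choose (l + 1) : ℝ) * (l + 1) = a.choose l * (a - l) := by
    rw [← Nat.cast_sub (by omega)]
    exact_mod_cast e2
  have hnR : (N₁ : ℝ) + (N₂ + ((l + 2 : ℕ) : ℝ)) + 3 * ((l + 2 : ℕ) : ℝ) * (((l + 2 : ℕ) : ℝ) + 2)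
      ≤ ((a + 1 : ℕ) : ℝ) := by
    exact_mod_cast hn
  rw [div_le_iff₀ hb0] at hN₁ hN₂
  have hdiv : ((a + 1 : ℕ) : ℝ) < ((l + 2 : ℕ) : ℝ) * (((a + 1) / (l + 2) : ℕ) + 1) := by
    exact_mod_cast Nat.lt_mul_div_succ (a + 1) (by omega)
  push_cast at hN₁ hN₂ hnR hdiv ⊢
  set c₁ : ℝ := ((a.choose (l + 1) : ℕ) : ℝ) with hc₁
  set c₂ : ℝ := ((a.choose l : ℕ) : ℝ) with hc₂
  set c : ℝ := (((a + 1).choose (l + 2) : ℕ) : ℝ) with hc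
  set m : ℝ := (((a + 1) / (l + 2) : ℕ) : ℝ) with hm
  set L : ℝ := (l : ℝ) with hL
  set t : ℝ := (a : ℝ) with ht
  have hc₁0 : 0 ≤ c₁ := Nat.cast_nonneg _
  have hc₂0 : 0 ≤ c₂ := Nat.cast_nonneg _
  have hc0 : 0 ≤ c := Nat.cast_nonneg _
  have hL0 : 0 ≤ L := Nat.cast_nonneg _
  have hN₁0 : (0 : ℝ) ≤ N₁ := Nat.cast_nonneg _
  have hN₂0 : (0 : ℝ) ≤ N₂ := Nat.cast_nonneg _
  have hsmall : ((L + 2) ^ 2 + (L + 2) + 1) * c₂ ≤ b / 2 * c₁ := by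
    have h1 : (N₂ : ℝ) ≤ t - L := by nlinarith
    have h2 : 2 * ((L + 2) ^ 2 + (L + 2) + 1) * (L + 2) * c₂ ≤ b * (c₁ * (L + 1)) := by
      rw [e2']
      calc _ ≤ N₂ * b * c₂ := by gcongr
        _ ≤ (t - L) * b * c₂ := by gcongr
        _ = _ := by ring
    have h3 : b * (c₁ * (L + 1)) ≤ b * (c₁ * (L + 2)) := by gcongr; linarith
    have h4 : (L + 2) * (((L + 2) ^ 2 + (L + 2) + 1) * c₂) ≤ (L + 2) * (b / 2 * c₁) := by linarith
    exact le_of_mul_le_mul_left h4 (by linarith)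
  have hD : 3 / 2 * b * c₁ ≤ 2 * b * c₁ - ((L + 2) ^ 2 + (L + 2) + 1) * c₂ := by linarith
  have hD0 : 0 ≤ 3 / 2 * b * c₁ := by positivity
  refine ⟨by omega, ?_, hD0.trans hD, ?_⟩
  · have h1 : (N₁ : ℝ) ≤ t + 1 := by nlinarith
    have h2 : (L + 2) * ((L + 2) * c₁) ≤ (L + 2) * (b * c) := by
      calc (L + 2) * ((L + 2) * c₁) = (L + 2) ^ 2 * c₁ := by ring
        _ ≤ N₁ * b * c₁ := by gcongr
        _ ≤ (t + 1) * b * c₁ := by gcongr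
        _ = b * ((t + 1) * c₁) := by ring
        _ = _ := by rw [e1']; ring
    exact le_of_mul_le_mul_left h2 (by linarith)
  · have hm' : 2 * (t + 1) ≤ 3 * (L + 2) * (m - (L + 2 + 1)) := by nlinarith
    have hm0 : 0 ≤ m - (L + 2 + 1) := by
      by_contra h
      push Not at h
      nlinarith
    refine le_trans ?_ (mul_le_mul_of_nonneg_left hD hm0)
    have h2 : (L + 2) * (b * c) ≤ (L + 2) * ((m - (L + 2 + 1)) * (3 / 2 * b * c₁)) := by
      calc (L + 2) * (b * c) = b * ((t + 1) * c₁) := by rw [e1']; ring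
        _ = (2 * (t + 1)) * (b * c₁ / 2) := by ring
        _ ≤ (3 * (L + 2) * (m - (L + 2 + 1))) * (b * c₁ / 2) := by gcongr
        _ = _ := by ring
    exact le_of_mul_le_mul_left h2 (by linarith)

theorem pow_self_le_factorial_mul (k : ℕ) (hk : 3 ≤ k) :
    k ^ k ≤ k.factorial * (k - 1).factorial ^ k := by
  obtain rfl | hk4 : k = 3 ∨ 4 ≤ k := by omega
  · decide
  · have h : k ≤ (k - 1).factorial := by
      obtain ⟨l, rfl⟩ : ∃ l, k = l + 2 := ⟨k - 2, by omega⟩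
      have h1 : l ≤ l.factorial := Nat.self_le_factorial l
      have : (l + 1).factorial = (l + 1) * l.factorial := Nat.factorial_succ l
      rw [show l + 2 - 1 = l + 1 by omega, this]
      nlinarith
    calc k ^ k ≤ (k - 1).factorial ^ k := Nat.pow_le_pow_left h k
      _ ≤ _ := Nat.le_mul_of_pos_left _ k.factorial_pos

/-- The vertex set consisting of `x` on the left and `s` on the right. -/
def partiteEdge {X V : Type*} [DecidableEq X] [DecidableEq V] (x : X) (s : Finset V) :
    Finset (X ⊕ V) :=
  insert (Sum.inl x) (s.image Sum.inr)

theorem card_filter_isLeft {X V : Type*} (Q : Finset (X ⊕ V)) :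
    #{v ∈ Q | v.isLeft = true} = #Q.toLeft := by
  rw [← card_map (f := (Function.Embedding.inl : X ↪ X ⊕ V)) (s := Q.toLeft)]
  congr 1
  ext (x | v) <;> simp

theorem card_filter_isRight {X V : Type*} (Q : Finset (X ⊕ V)) :
    #{v ∈ Q | v.isRight = true} = #Q.toRight := by
  rw [← card_map (f := (Function.Embedding.inr : V ↪ X ⊕ V)) (s := Q.toRight)]
  congr 1
  ext (x | v) <;> simp

section VertexDisjoint

variable {X V : Type*}

/-- Two pairs (left vertex, set of right vertices) that share no vertex. -/
def VertexDisjoint (q q' : X × Finset V) : Prop :=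
  q.1 ≠ q'.1 ∧ Disjoint q.2 q'.2

theorem VertexDisjoint.symm {q q' : X × Finset V} (h : VertexDisjoint q q') :
    VertexDisjoint q' q :=
  ⟨h.1.symm, h.2.symm⟩

end VertexDisjoint

section PartiteEdge

variable {X V : Type*} [DecidableEq X] [DecidableEq V]

@[simp]
theorem inl_mem_partiteEdge {x y : X} {s : Finset V} :
    Sum.inl y ∈ partiteEdge x s ↔ y = x := by
  simp [partiteEdge]

@[simp]
theorem inr_mem_partiteEdge {x : X} {v : V} {s : Finset V} :
    Sum.inr v ∈ partiteEdge x s ↔ v ∈ s := by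
  simp [partiteEdge]

theorem hasPM_disjSum {ι : Type*} [Fintype ι] (H : Finset (Finset (X ⊕ V))) (x : ι → X)
    (S : ι → Finset V) (hx : Function.Injective x)
    (hS : ∀ i j, i ≠ j → Disjoint (S i) (S j)) (hH : ∀ i, partiteEdge (x i) (S i) ∈ H) :
    HasPM H ((univ.image x).disjSum (univ.biUnion S)) := by
  refine ⟨univ.image fun i => partiteEdge (x i) (S i), ?_, ?_, ?_, ?_⟩
  · intro e he
    obtain ⟨i, -, rfl⟩ := mem_image.1 he
    exact hH i
  · intro e he
    obtain ⟨i, -, rfl⟩ := mem_image.1 he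
    rintro (y | v) h
    · rw [inl_mem_partiteEdge] at h
      simp [h]
    · rw [inr_mem_partiteEdge] at h
      simp only [inr_mem_disjSum, mem_biUnion, mem_univ, true_and]
      exact ⟨i, h⟩
  · intro e he f hf hef
    obtain ⟨i, -, rfl⟩ := mem_image.1 he
    obtain ⟨j, -, rfl⟩ := mem_image.1 hf
    have hij : i ≠ j := by
      rintro rfl
      exact hef rfl
    rw [disjoint_left]
    rintro (y | v) h h'
    · rw [inl_mem_partiteEdge] at h h'
      exact hij (hx (h.symm.trans h'))
    · rw [inr_mem_partiteEdge] at h h'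
      exact disjoint_left.1 (hS i j hij) h h'
  · rintro (y | v) h
    · simp only [inl_mem_disjSum, mem_image, mem_univ, true_and] at h
      obtain ⟨i, rfl⟩ := h
      exact ⟨_, mem_image_of_mem _ (mem_univ i), by simp⟩
    · simp only [inr_mem_disjSum, mem_biUnion, mem_univ, true_and] at h
      obtain ⟨i, hi⟩ := h
      exact ⟨_, mem_image_of_mem _ (mem_univ i), by simpa using hi⟩

instance : DecidableRel (VertexDisjoint : X × Finset V → X × Finset V → Prop) := fun _ _ =>
  inferInstanceAs (Decidable (_ ∧ _))

/-- The vertex set assembled from `W` and the pairs `p i`. -/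
def assemble {k : ℕ} (W : Finset V) (p : Fin k → X × Finset V) : Finset (X ⊕ V) :=
  (univ.image fun i => (p i).1).disjSum (W ∪ univ.biUnion fun i => (p i).2)

theorem card_toLeft_assemble {k : ℕ} (W : Finset V) (p : Fin k → X × Finset V)
    (hpp : ∀ i j, i ≠ j → VertexDisjoint (p i) (p j)) : #(assemble W p).toLeft = k := by
  rw [assemble, toLeft_disjSum, card_image_of_injective, card_univ, Fintype.card_fin]
  intro i j h
  by_contra hij
  exact (hpp i j hij).1 h

theorem card_toRight_assemble {k : ℕ} (W : Finset V) (p : Fin k → X × Finset V)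
    (hW : #W = k) (hp : ∀ i, #(p i).2 = k - 1) (hWp : ∀ i, Disjoint (p i).2 W)
    (hpp : ∀ i j, i ≠ j → VertexDisjoint (p i) (p j)) : #(assemble W p).toRight = k ^ 2 := by
  rw [assemble, toRight_disjSum, card_union_of_disjoint, card_biUnion, sum_congr rfl fun i _ => hp i,
    sum_const, card_univ, Fintype.card_fin, hW, smul_eq_mul, Nat.mul_sub_one, sq]
  · exact Nat.add_sub_of_le (Nat.le_mul_self k)
  · exact fun i _ j _ hij => (hpp i j hij).2
  · exact (disjoint_biUnion_right _ _ _).2 fun i _ => (hWp i).symm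

variable [Fintype V]

theorem mul_card_lt_mul_card_link [Nonempty V] (H : Finset (Finset (X ⊕ V))) (k : ℕ)
    (hH : ∀ e ∈ H, ∃ x s, #s = k ∧ e = partiteEdge x s) (x : X) (d : ℝ)
    (hd : ∀ v, d < (#{e ∈ H | Sum.inl x ∈ e ∧ Sum.inr v ∈ e} : ℝ)) :
    Fintype.card V * d < k * (#{s ∈ powersetCard k (univ : Finset V) | partiteEdge x s ∈ H} : ℝ) := by
  set L : Finset (Finset V) := {s ∈ powersetCard k (univ : Finset V) | partiteEdge x s ∈ H} with hL
  have h1 : ∀ v, #{e ∈ H | Sum.inl x ∈ e ∧ Sum.inr v ∈ e} ≤ #{s ∈ L | v ∈ s} := by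
    intro v
    refine card_le_card_of_surjOn (partiteEdge x) ?_
    intro e he
    simp only [coe_filter, Set.mem_ofPred_eq] at he
    obtain ⟨y, s, hs, rfl⟩ := hH e he.1
    simp only [inl_mem_partiteEdge, inr_mem_partiteEdge] at he
    obtain ⟨h1, rfl, h2⟩ := he
    exact ⟨s, by simp [hL, hs, h1, h2], rfl⟩
  have h2 : ∑ v, #{s ∈ L | v ∈ s} = #L * k := by
    have := sum_card_bipartiteAbove_eq_sum_card_bipartiteBelow (s := (univ : Finset V)) (t := L)
      (fun v s => v ∈ s)
    simp only [bipartiteAbove, bipartiteBelow] at this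
    rw [this, ← smul_eq_mul, ← sum_const]
    refine sum_congr rfl fun s hs => ?_
    simp only [hL, mem_filter, mem_powersetCard] at hs
    rw [filter_mem_eq_inter, univ_inter, hs.1.2]
  calc Fintype.card V * d = ∑ v : V, d := by simp
    _ < ∑ v : V, (#{s ∈ L | v ∈ s} : ℝ) :=
      sum_lt_sum_of_nonempty univ_nonempty fun v _ => (hd v).trans_le (by exact_mod_cast h1 v)
    _ = k * (#L : ℝ) := by rw [mul_comm]; exact_mod_cast h2

theorem card_filter_mem_le_card_link (H : Finset (Finset (X ⊕ V))) (k : ℕ)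
    (hH : ∀ e ∈ H, ∃ x s, #s = k ∧ e = partiteEdge x s) (x : X) (v : V) :
    #{e ∈ H | Sum.inl x ∈ e ∧ Sum.inr v ∈ e} ≤
      #{S ∈ powersetCard (k - 1) (univ : Finset V) | partiteEdge x (insert v S) ∈ H} := by
  refine card_le_card_of_surjOn (fun S => partiteEdge x (insert v S)) ?_
  intro e he
  simp only [coe_filter, Set.mem_ofPred_eq] at he
  obtain ⟨y, s, hs, rfl⟩ := hH e he.1
  simp only [inl_mem_partiteEdge, inr_mem_partiteEdge] at he
  obtain ⟨h1, rfl, h2⟩ := he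
  exact ⟨s.erase v, by simp [card_erase_of_mem h2, hs, insert_erase h2, h1],
    by simp [insert_erase h2]⟩

theorem card_common_link_ge (H : Finset (Finset (X ⊕ V))) (k : ℕ) (hk : 2 ≤ k)
    (hn : 1 ≤ Fintype.card V) (b : ℝ) (x : X) (v w : V)
    (hv : (1 / 2 + b) * ((Fintype.card V - 1).choose (k - 1) : ℝ) ≤
      #{S ∈ powersetCard (k - 1) (univ : Finset V) | partiteEdge x (insert v S) ∈ H})
    (hw : (1 / 2 + b) * ((Fintype.card V - 1).choose (k - 1) : ℝ) ≤
      #{S ∈ powersetCard (k - 1) (univ : Finset V) | partiteEdge x (insert w S) ∈ H})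
    (Z : Finset V) (z : ℕ) (hZ : #Z ≤ z) :
    2 * b * (Fintype.card V - 1).choose (k - 1) - (z + 1) * (Fintype.card V - 1).choose (k - 2) ≤
      (#{S ∈ powersetCard (k - 1) (univ : Finset V) | Disjoint S Z ∧
        partiteEdge x (insert v S) ∈ H ∧ partiteEdge x (insert w S) ∈ H} : ℝ) := by
  set P := powersetCard (k - 1) (univ : Finset V) with hP
  set A := {S ∈ P | partiteEdge x (insert v S) ∈ H}
  set B := {S ∈ P | partiteEdge x (insert w S) ∈ H}
  set G := {S ∈ P | Disjoint S Z ∧ partiteEdge x (insert v S) ∈ H ∧ partiteEdge x (insert w S) ∈ H}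
  set D := {S ∈ P | ¬ Disjoint S Z}
  have h1 : #(A ∪ B) + #(A ∩ B) = #A + #B := card_union_add_card_inter A B
  have h2 : #(A ∪ B) ≤ #P := card_le_card (union_subset (filter_subset _ _) (filter_subset _ _))
  have h3 : A ∩ B ⊆ G ∪ D := by
    intro S hS
    simp only [A, B, G, D, mem_inter, mem_filter, mem_union] at hS ⊢
    tauto
  have h4 : #(A ∩ B) ≤ #G + #D := (card_le_card h3).trans (card_union_le _ _)
  have h5 : #D ≤ z * (Fintype.card V - 1).choose (k - 2) := by
    refine (card_powersetCard_filter_not_disjoint_le (k - 1) Z).trans ?_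
    rw [show k - 1 - 1 = k - 2 by omega]
    exact Nat.mul_le_mul_right _ hZ
  have h6 : #P = (Fintype.card V - 1).choose (k - 2) + (Fintype.card V - 1).choose (k - 1) := by
    rw [hP, card_powersetCard, card_univ]
    obtain ⟨a, ha⟩ : ∃ a, Fintype.card V = a + 1 := ⟨Fintype.card V - 1, by omega⟩
    obtain ⟨l, rfl⟩ : ∃ l, k = l + 2 := ⟨k - 2, by omega⟩
    rw [ha]
    exact Nat.choose_succ_succ a l
  have h7 : #A + #B ≤ (Fintype.card V - 1).choose (k - 2) + (Fintype.card V - 1).choose (k - 1) +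
      (#G + z * (Fintype.card V - 1).choose (k - 2)) := by omega
  have h8 : (#A + #B : ℝ) ≤ (Fintype.card V - 1).choose (k - 2) +
      (Fintype.card V - 1).choose (k - 1) + (#G + z * (Fintype.card V - 1).choose (k - 2)) := by
    exact_mod_cast h7
  linarith

variable [Fintype X]

/-- The pairs of a left vertex other than `x₀` and `s` right vertices outside `Z` that can be
completed to an edge by `v` as well as by `w`. -/
def exchangePairs (H : Finset (Finset (X ⊕ V))) (s : ℕ) (x₀ : X) (Z : Finset V) (v w : V) :
    Finset (X × Finset V) :=
  {q | q.1 ≠ x₀ ∧ #q.2 = s ∧ Disjoint q.2 Z ∧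
    partiteEdge q.1 (insert v q.2) ∈ H ∧ partiteEdge q.1 (insert w q.2) ∈ H}

theorem card_exchangePairs_vertexDisjoint_ge (H : Finset (Finset (X ⊕ V))) (k : ℕ) (hk : 2 ≤ k)
    (hn : 1 ≤ Fintype.card V) (b : ℝ)
    (hd : ∀ x v, (1 / 2 + b) * ((Fintype.card V - 1).choose (k - 1) : ℝ) ≤
      #{S ∈ powersetCard (k - 1) (univ : Finset V) | partiteEdge x (insert v S) ∈ H})
    (hD : 0 ≤ 2 * b * (Fintype.card V - 1).choose (k - 1) -
      (k ^ 2 + k + 1) * (Fintype.card V - 1).choose (k - 2))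
    (x₀ : X) (Z : Finset V) (hZ : #Z ≤ 2 * k) (v w : V) (F : Finset (X × Finset V))
    (hF : ∀ f ∈ F, #f.2 = k - 1) (hFk : #F ≤ k) :
    (Fintype.card X - (k + 1) : ℝ) * (2 * b * (Fintype.card V - 1).choose (k - 1) -
      (k ^ 2 + k + 1) * (Fintype.card V - 1).choose (k - 2)) ≤
      (#{q ∈ exchangePairs H (k - 1) x₀ Z v w | ∀ f ∈ F, VertexDisjoint q f} : ℝ) := by
  set D : ℝ := 2 * b * (Fintype.card V - 1).choose (k - 1) -
    (k ^ 2 + k + 1) * (Fintype.card V - 1).choose (k - 2) with hDdef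
  set Y : Finset X := (insert x₀ (F.image Prod.fst))ᶜ with hY
  set Z' : Finset V := Z ∪ F.biUnion Prod.snd with hZ'
  set T : X → Finset (Finset V) := fun x =>
    {S ∈ powersetCard (k - 1) (univ : Finset V) | Disjoint S Z' ∧
        partiteEdge x (insert v S) ∈ H ∧ partiteEdge x (insert w S) ∈ H} with hT
  have hZ'c : #Z' ≤ k ^ 2 + k := by
    have h1 : #(F.biUnion Prod.snd) ≤ #F * (k - 1) :=
      card_biUnion_le_card_mul _ _ _ fun f hf => (hF f hf).le
    have h2 : #F * (k - 1) ≤ k * (k - 1) := Nat.mul_le_mul_right _ hFk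
    have h3 := card_union_le Z (F.biUnion Prod.snd)
    obtain ⟨l, rfl⟩ : ∃ l, k = l + 1 := ⟨k - 1, by omega⟩
    rw [Nat.add_sub_cancel] at h1 h2
    nlinarith
  have hTc : ∀ x, D ≤ (#(T x) : ℝ) := by
    intro x
    have := card_common_link_ge H k hk hn b x v w (hd x v) (hd x w) Z' (k ^ 2 + k) hZ'c
    push_cast at this
    exact this
  have hYc : (Fintype.card X - (k + 1) : ℝ) ≤ #Y := by
    have h1 : #(insert x₀ (F.image Prod.fst)) ≤ k + 1 :=
      (card_insert_le _ _).trans (Nat.succ_le_succ (card_image_le.trans hFk))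
    have h2 := card_add_card_compl (insert x₀ (F.image Prod.fst))
    have h3 : Fintype.card X ≤ #Y + (k + 1) := by rw [← hY] at h2; omega
    have h4 : (Fintype.card X : ℝ) ≤ #Y + (k + 1) := by exact_mod_cast h3
    linarith
  have hle : #(Y.sigma T) ≤
      #{q ∈ exchangePairs H (k - 1) x₀ Z v w | ∀ f ∈ F, VertexDisjoint q f} := by
    refine card_le_card_of_injOn (fun a => (a.1, a.2)) ?_ ?_
    · rintro ⟨x, S⟩ h
      simp only [coe_sigma, Set.mem_sigma_iff, mem_coe, hY, hT, mem_compl, mem_insert, mem_image,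
        not_or, mem_filter, mem_powersetCard, hZ', disjoint_union_right,
        disjoint_biUnion_right] at h
      obtain ⟨⟨h1, h2⟩, ⟨-, h3⟩, ⟨h4, h5⟩, h6, h7⟩ := h
      simp only [mem_coe, exchangePairs, mem_filter, mem_univ, true_and]
      exact ⟨⟨h1, h3, h4, h6, h7⟩, fun f hf => ⟨fun h => h2 ⟨f, hf, h.symm⟩, h5 f hf⟩⟩
    · rintro ⟨x, S⟩ _ ⟨x', S'⟩ _ h
      simp only [Prod.mk.injEq] at h
      rw [h.1, h.2]
  calc _ ≤ #Y * D := by gcongr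
    _ = ∑ x ∈ Y, D := by rw [sum_const, nsmul_eq_mul]
    _ ≤ ∑ x ∈ Y, (#(T x) : ℝ) := sum_le_sum fun x _ => hTc x
    _ = (#(Y.sigma T) : ℝ) := by rw [card_sigma]; push_cast; rfl
    _ ≤ _ := by exact_mod_cast hle

theorem hasPM_assemble {k s : ℕ} (H : Finset (Finset (X ⊕ V))) (x₀ : X) (v w : Fin k → V)
    (W Z : Finset V) (hw : Function.Injective w)
    (hW : univ.image w = W) (hWZ : W ⊆ Z) (p : Fin k → X × Finset V)
    (hp : ∀ i, p i ∈ exchangePairs H s x₀ Z (v i) (w i))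
    (hpp : ∀ i j, i ≠ j → VertexDisjoint (p i) (p j)) :
    HasPM H (assemble W p) := by
  simp only [exchangePairs, mem_filter, mem_univ, true_and] at hp
  have hwZ : ∀ i, w i ∈ Z := fun i => hWZ (hW ▸ mem_image_of_mem w (mem_univ i))
  have heq : assemble W p = (univ.image fun i => (p i).1).disjSum
      (univ.biUnion fun i => insert (w i) (p i).2) := by
    rw [assemble, ← hW]
    congr 1
    ext u
    simp only [mem_union, mem_image, mem_univ, true_and, mem_biUnion, mem_insert, exists_or]
    simp only [eq_comm]
  rw [heq]
  refine hasPM_disjSum H _ _ (fun i j h => ?_) (fun i j hij => ?_) fun i => (hp i).2.2.2.2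
  · by_contra hij
    exact (hpp i j hij).1 h
  · simp only [disjoint_insert_left, disjoint_insert_right, mem_insert, not_or]
    exact ⟨⟨fun h => hij (hw h.symm), disjoint_right.1 (hp i).2.2.1 (hwZ j)⟩,
      disjoint_right.1 (hp j).2.2.1 (hwZ i), (hpp i j hij).2⟩

theorem hasPM_assemble_union {k s : ℕ} (H : Finset (Finset (X ⊕ V))) (x₀ : X) (v w : Fin k → V)
    (W V₀ : Finset V) (hv : Function.Injective v)
    (hV : univ.image v = V₀) (hVW : Disjoint W V₀) (hW : partiteEdge x₀ W ∈ H)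
    (p : Fin k → X × Finset V)
    (hp : ∀ i, p i ∈ exchangePairs H s x₀ (V₀ ∪ W) (v i) (w i))
    (hpp : ∀ i j, i ≠ j → VertexDisjoint (p i) (p j)) :
    HasPM H (assemble W p ∪ partiteEdge x₀ V₀) := by
  simp only [exchangePairs, mem_filter, mem_univ, true_and, disjoint_union_right] at hp
  have hvV : ∀ i, v i ∈ V₀ := fun i => hV ▸ mem_image_of_mem v (mem_univ i)
  let x : Option (Fin k) → X := fun o => o.elim x₀ fun i => (p i).1
  let S : Option (Fin k) → Finset V := fun o => o.elim W fun i => insert (v i) (p i).2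
  have heq : assemble W p ∪ partiteEdge x₀ V₀ = (univ.image x).disjSum (univ.biUnion S) := by
    rw [assemble, ← hV]
    ext (y | u)
    · simp [x, Option.exists, eq_comm, or_comm]
    · simp only [mem_union, inr_mem_disjSum, inr_mem_partiteEdge, mem_image, mem_biUnion, mem_univ,
        true_and, Option.exists, S, Option.elim, mem_insert, exists_or]
      simp only [eq_comm]
      tauto
  have hWS : ∀ i, Disjoint W (insert (v i) (p i).2) := fun i =>
    disjoint_insert_right.2 ⟨disjoint_right.1 hVW (hvV i), (hp i).2.2.1.2.symm⟩
  rw [heq]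
  refine hasPM_disjSum H x S ?_ ?_ ?_
  · rintro (_ | i) (_ | j) h
    · rfl
    · exact ((hp j).1 h.symm).elim
    · exact ((hp i).1 h).elim
    · by_contra hij
      exact (hpp i j fun h => hij (h ▸ rfl)).1 h
  · rintro (_ | i) (_ | j) hij
    · exact (hij rfl).elim
    · exact hWS j
    · exact (hWS i).symm
    · have hij' : i ≠ j := fun h => hij (h ▸ rfl)
      simp only [S, Option.elim, disjoint_insert_left, disjoint_insert_right, mem_insert, not_or]
      exact ⟨⟨fun h => hij' (hv h.symm), disjoint_right.1 (hp i).2.2.1.1 (hvV j)⟩,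
        disjoint_right.1 (hp j).2.2.1.1 (hvV i), (hpp i j hij').2⟩
  · rintro (_ | i)
    · exact hW
    · exact (hp i).2.2.2.1

/-- The number of ways in which a set with `k` left and `k ^ 2` right vertices is assembled. -/
theorem card_assemblies_le (k : ℕ) (hk : 3 ≤ k) (A : Finset X) (U : Finset V) (hA : #A = k)
    (hU : #U = k ^ 2) :
    #((powersetCard k U).sigma fun W => ({p : Fin k → X × Finset V |
      (∀ i, (p i).1 ∈ A ∧ (p i).2 ⊆ U \ W ∧ #(p i).2 = k - 1) ∧
        ∀ i i', i ≠ i' → Disjoint (p i).2 (p i').2} : Finset (Fin k → X × Finset V))) ≤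
      (k ^ 2).factorial := by
  set T : Finset V → Finset (Fin k → X × Finset V) := fun W => {p : Fin k → X × Finset V |
      (∀ i, (p i).1 ∈ A ∧ (p i).2 ⊆ U \ W ∧ #(p i).2 = k - 1) ∧
        ∀ i i', i ≠ i' → Disjoint (p i).2 (p i').2}
  have hkk : k ≤ k ^ 2 := Nat.le_self_pow two_ne_zero k
  have hsub : k ^ 2 - k = k * (k - 1) := by rw [Nat.mul_sub_one, sq]
  have hT : ∀ W ∈ powersetCard k U,
      #(T W) * (k - 1).factorial ^ k ≤ k ^ k * (k * (k - 1)).factorial := by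
    intro W hW
    obtain ⟨hWU, hWk⟩ := mem_powersetCard.1 hW
    have := card_disjoint_tuples_mul_le A (k - 1) k (U \ W)
      (by rw [card_sdiff_of_subset hWU, hU, hWk, hsub])
    rwa [hA] at this
  have hch := Nat.choose_mul_factorial_mul_factorial hkk
  rw [hsub] at hch
  refine le_of_mul_le_mul_left (a := k.factorial * (k - 1).factorial ^ k) ?_ (by positivity)
  calc k.factorial * (k - 1).factorial ^ k * #((powersetCard k U).sigma T)
      = k.factorial * ∑ W ∈ powersetCard k U, #(T W) * (k - 1).factorial ^ k := by
        rw [card_sigma, ← sum_mul]; ring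
    _ ≤ k.factorial * ∑ W ∈ powersetCard k U, k ^ k * (k * (k - 1)).factorial :=
        Nat.mul_le_mul_left _ (sum_le_sum hT)
    _ = k ^ k * ((k ^ 2).choose k * k.factorial * (k * (k - 1)).factorial) := by
        rw [sum_const, smul_eq_mul, card_powersetCard, hU]; ring
    _ ≤ k.factorial * (k - 1).factorial ^ k * (k ^ 2).factorial := by
        rw [hch]; exact Nat.mul_le_mul_right _ (pow_self_le_factorial_mul k hk)

end PartiteEdge

theorem card_link_disjoint_ge {X V : Type*} [DecidableEq X] [Fintype V] [DecidableEq V]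
    (H : Finset (Finset (X ⊕ V))) (k : ℕ) (hk : 1 ≤ k) (hkn : k ≤ Fintype.card V)
    (hH : ∀ e ∈ H, ∃ x s, #s = k ∧ e = partiteEdge x s) (b : ℝ) (x : X)
    (hd : ∀ v, (1 / 2 + b) * ((Fintype.card V - 1).choose (k - 1) : ℝ) <
      (#{e ∈ H | Sum.inl x ∈ e ∧ Sum.inr v ∈ e} : ℝ))
    (hb : (k : ℝ) * (Fintype.card V - 1).choose (k - 1) ≤ b * (Fintype.card V).choose k)
    (V₀ : Finset V) (hV₀ : #V₀ = k) :
    1 / 2 * ((Fintype.card V).choose k : ℝ) ≤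
      #{W ∈ powersetCard k (univ : Finset V) | partiteEdge x W ∈ H ∧ Disjoint W V₀} := by
  have : Nonempty V := Fintype.card_pos_iff.1 (by omega)
  have hlink := mul_card_lt_mul_card_link H k hH x _ hd
  set L : Finset (Finset V) := {s ∈ powersetCard k (univ : Finset V) | partiteEdge x s ∈ H}
  set G : Finset (Finset V) :=
    {W ∈ powersetCard k (univ : Finset V) | partiteEdge x W ∈ H ∧ Disjoint W V₀}
  set D : Finset (Finset V) := {W ∈ powersetCard k (univ : Finset V) | ¬ Disjoint W V₀}
  have hLGD : #L ≤ #G + #D := by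
    refine (card_le_card fun S hS => ?_).trans (card_union_le G D)
    simp only [L, G, D, mem_filter, mem_union] at hS ⊢
    tauto
  have hD : #D ≤ k * (Fintype.card V - 1).choose (k - 1) := by
    have := card_powersetCard_filter_not_disjoint_le k V₀
    rwa [hV₀] at this
  have e1 : Fintype.card V * (Fintype.card V - 1).choose (k - 1) =
      (Fintype.card V).choose k * k := by
    have := Nat.add_one_mul_choose_eq (Fintype.card V - 1) (k - 1)
    rwa [Nat.sub_add_cancel (hk.trans hkn), Nat.sub_add_cancel hk] at this
  have e1' : (Fintype.card V : ℝ) * (Fintype.card V - 1).choose (k - 1) =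
      (Fintype.card V).choose k * k := by
    exact_mod_cast e1
  have hL : (1 / 2 + b) * ((Fintype.card V).choose k : ℝ) < #L := by
    refine lt_of_mul_lt_mul_left (a := (k : ℝ)) ?_ (Nat.cast_nonneg k)
    refine lt_of_eq_of_lt ?_ hlink
    linear_combination -(1 / 2 + b) * e1'
  have h1 : (#L : ℝ) ≤ #G + #D := by exact_mod_cast hLGD
  have h2 : (#D : ℝ) ≤ k * (Fintype.card V - 1).choose (k - 1) := by exact_mod_cast hD
  linarith

theorem exists_enumeration (V : Type*) [DecidableEq V] [Nonempty V] (k : ℕ) :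
    ∃ w : Finset V → Fin k → V, ∀ W, #W = k → Function.Injective (w W) ∧ univ.image (w W) = W := by
  have h : ∀ W : Finset V, ∃ w : Fin k → V, #W = k → Function.Injective w ∧ univ.image w = W := by
    intro W
    by_cases hW : #W = k
    · let e := (W.equivFinOfCardEq hW).symm
      refine ⟨fun i => e i, fun _ => ⟨Subtype.val_injective.comp e.injective, ?_⟩⟩
      ext u
      simp only [mem_image, mem_univ, true_and]
      exact ⟨by rintro ⟨i, rfl⟩; exact (e i).2, fun hu => ⟨e.symm ⟨u, hu⟩, by simp⟩⟩
    · exact ⟨fun _ => Classical.arbitrary V, fun h => (hW h).elim⟩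
  exact ⟨fun W => (h W).choose, fun W => (h W).choose_spec⟩

/-- Absorbing sets are obtained from a set `W` completing `x₀` to an edge by exchanging, one after
the other, the vertices of `V₀` for those of `W`. -/
theorem card_absorbing_ge {X V : Type*} [Fintype X] [DecidableEq X] [Fintype V] [DecidableEq V]
    (H : Finset (Finset (X ⊕ V))) (k : ℕ) (hk : 3 ≤ k) (hkn : k ≤ Fintype.card V)
    (hH : ∀ e ∈ H, ∃ x s, #s = k ∧ e = partiteEdge x s) (b : ℝ) (hb0 : 0 < b)
    (hd : ∀ x v, (1 / 2 + b) * ((Fintype.card V - 1).choose (k - 1) : ℝ) <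
      (#{e ∈ H | Sum.inl x ∈ e ∧ Sum.inr v ∈ e} : ℝ))
    (hb : (k : ℝ) * (Fintype.card V - 1).choose (k - 1) ≤ b * (Fintype.card V).choose k)
    (hD : 0 ≤ 2 * b * (Fintype.card V - 1).choose (k - 1) -
      (k ^ 2 + k + 1) * (Fintype.card V - 1).choose (k - 2))
    (hDb : b * (Fintype.card V).choose k ≤ (Fintype.card X - (k + 1) : ℝ) *
      (2 * b * (Fintype.card V - 1).choose (k - 1) -
        (k ^ 2 + k + 1) * (Fintype.card V - 1).choose (k - 2)))
    (x₀ : X) (V₀ : Finset V) (hV₀ : #V₀ = k) (𝒬 : Finset (Finset (X ⊕ V)))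
    (h𝒬 : ∀ Q, Q ∈ 𝒬 ↔ #Q.toLeft = k ∧ #Q.toRight = k ^ 2 ∧ HasPM H Q ∧
      HasPM H (Q ∪ partiteEdge x₀ V₀)) :
    b ^ k * ((Fintype.card V).choose k : ℝ) ^ (k + 1) / (2 * ((k ^ 2).factorial : ℝ)) ≤ #𝒬 := by
  have : Nonempty V := Fintype.card_pos_iff.1 (by omega)
  obtain ⟨w, hw⟩ := exists_enumeration V k
  obtain ⟨hv, hvV⟩ := hw V₀ hV₀
  set N : ℝ := ((Fintype.card V).choose k : ℝ) with hN
  set 𝒲 : Finset (Finset V) :=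
    {W ∈ powersetCard k (univ : Finset V) | partiteEdge x₀ W ∈ H ∧ Disjoint W V₀} with h𝒲
  let G : Finset V → Fin k → Finset (X × Finset V) := fun W i =>
    exchangePairs H (k - 1) x₀ (V₀ ∪ W) (w V₀ i) (w W i)
  let T : Finset V → Finset (Fin k → X × Finset V) := fun W =>
    {p | (∀ i, p i ∈ G W i) ∧ ∀ i i', i ≠ i' → VertexDisjoint (p i) (p i')}
  have hTW : ∀ W ∈ 𝒲, (b * N) ^ k ≤ (#(T W) : ℝ) := by
    intro W hW
    simp only [h𝒲, mem_filter, mem_powersetCard] at hW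
    have hgreedy := pow_le_card_compatible_tuples (VertexDisjoint : X × Finset V → _ → Prop)
      (fun _ _ h => h.symm) {q | #q.2 = k - 1} k (b * N) (by positivity) k (G W) ∅ ?_
      (empty_subset _) (by simp) ?_
    · simpa only [notMem_empty, false_imp_iff, implies_true, and_true] using hgreedy
    · intro i q hq
      simp only [G, exchangePairs, mem_filter, mem_univ, true_and] at hq ⊢
      exact hq.2.1
    · intro i F hF hFk
      refine hDb.trans (card_exchangePairs_vertexDisjoint_ge H k (by omega) (by omega) b
        (fun x v => (hd x v).le.trans (by exact_mod_cast card_filter_mem_le_card_link H k hH x v))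
        hD x₀ (V₀ ∪ W) ?_ _ _ F (fun f hf => ?_) hFk)
      · have := card_union_le V₀ W
        omega
      · simpa using hF hf
  have hT : 1 / 2 * N * (b * N) ^ k ≤ (#(𝒲.sigma T) : ℝ) := by
    calc 1 / 2 * N * (b * N) ^ k ≤ #𝒲 * (b * N) ^ k := by
          gcongr
          exact card_link_disjoint_ge H k (by omega) hkn hH b x₀ (hd x₀) hb V₀ hV₀
      _ = ∑ W ∈ 𝒲, (b * N) ^ k := by rw [sum_const, nsmul_eq_mul]
      _ ≤ ∑ W ∈ 𝒲, (#(T W) : ℝ) := sum_le_sum hTW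
      _ = _ := by rw [card_sigma]; push_cast; rfl
  have hmaps : ∀ a ∈ 𝒲.sigma T, assemble a.1 a.2 ∈ 𝒬 := by
    rintro ⟨W, p⟩ h
    simp only [mem_sigma, h𝒲, T, G, mem_filter, mem_powersetCard, mem_univ, true_and] at h
    obtain ⟨⟨⟨-, hWk⟩, hWH, hWV⟩, hp, hpp⟩ := h
    obtain ⟨hwi, hwW⟩ := hw W hWk
    refine (h𝒬 _).2 ⟨card_toLeft_assemble W p hpp, card_toRight_assemble W p hWk ?_ ?_ hpp,
      hasPM_assemble H x₀ _ _ W _ hwi hwW subset_union_right p hp hpp,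
      hasPM_assemble_union H x₀ _ _ W V₀ hv hvV hWV hWH p hp hpp⟩
    · exact fun i => (mem_filter.1 (hp i)).2.2.1
    · exact fun i => (disjoint_union_right.1 (mem_filter.1 (hp i)).2.2.2.1).2
  have hfiber : ∀ Q ∈ 𝒬, #{a ∈ 𝒲.sigma T | assemble a.1 a.2 = Q} ≤ (k ^ 2).factorial := by
    intro Q hQ
    obtain ⟨hQl, hQr, -⟩ := (h𝒬 Q).1 hQ
    refine (card_le_card ?_).trans (card_assemblies_le k hk Q.toLeft Q.toRight hQl hQr)
    rintro ⟨W, p⟩ h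
    simp only [mem_sigma, h𝒲, T, G, mem_filter, mem_powersetCard, mem_univ, true_and] at h
    obtain ⟨⟨⟨⟨-, hWk⟩, -⟩, hp, hpp⟩, rfl⟩ := h
    simp only [mem_sigma, mem_powersetCard, mem_filter, mem_univ, true_and, assemble,
      toLeft_disjSum, toRight_disjSum]
    refine ⟨⟨subset_union_left, hWk⟩, fun i => ⟨mem_image_of_mem _ (mem_univ i), ?_,
      (mem_filter.1 (hp i)).2.2.1⟩, fun i i' hi => (hpp i i' hi).2⟩
    exact subset_sdiff.2 ⟨(subset_biUnion_of_mem (fun i => (p i).2) (mem_univ i)).trans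
      subset_union_right, (disjoint_union_right.1 (mem_filter.1 (hp i)).2.2.2.1).2⟩
  have hcard : (#(𝒲.sigma T) : ℝ) ≤ (k ^ 2).factorial * #𝒬 := by
    exact_mod_cast card_le_mul_card_image_of_maps_to hmaps _ hfiber
  rw [div_le_iff₀ (by positivity)]
  have hexp : b ^ k * N ^ (k + 1) = 2 * (1 / 2 * N * (b * N) ^ k) := by
    rw [mul_pow, pow_succ]
    ring
  rw [hexp]
  linarith

end AbsorbingSets

/-- Let `k ≥ 3`, `0 < b < 1/k`, and let `n` be sufficiently large.
Let `H` be a `(1,k)`-partite `(k+1)`-graph with partition classes `X = Fin (n/k)`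
and `[n]` such that `δ₁(N_H(x)) > (1/2 + b)·C(n-1,k-1)` for every `x ∈ X`. Then for
every balanced `(k+1)`-set `R` (one vertex in `X`, `k` in `[n]`), the number of
`R`-absorbing balanced `k(k+1)`-sets `Q` (i.e. with `|Q ∩ X| = k`, `|Q ∩ [n]| = k²`,
and both `H[Q]` and `H[Q ∪ R]` having perfect matchings) is at least
`b^k · C(n,k)^{k+1} / (2·(k²)!)`. -/
theorem count_absorbing_sets (k : ℕ) (hk : 3 ≤ k) (b : ℝ)
    (hb0 : 0 < b) (hb1 : b < 1 / (k : ℝ)) :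
    ∃ N : ℕ, ∀ n : ℕ, N ≤ n →
    ∀ H : Finset (Finset (Fin (n / k) ⊕ Fin n)),
      (∀ e ∈ H, ∃ (x : Fin (n / k)) (s : Finset (Fin n)),
        s.card = k ∧ e = insert (Sum.inl x) (s.image Sum.inr)) →
      (∀ (x : Fin (n / k)) (v : Fin n),
        (1 / 2 + b) * (Nat.choose (n - 1) (k - 1) : ℝ)
          < ((H.filter (fun e => Sum.inl x ∈ e ∧ Sum.inr v ∈ e)).card : ℝ)) →
      ∀ R : Finset (Fin (n / k) ⊕ Fin n),
        (R.filter (fun v => v.isLeft = true)).card = 1 →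
        (R.filter (fun v => v.isRight = true)).card = k →
        b ^ k * ((Nat.choose n k : ℝ)) ^ (k + 1) / (2 * (Nat.factorial (k ^ 2) : ℝ))
          ≤ ({Q : Finset (Fin (n / k) ⊕ Fin n) |
              (Q.filter (fun v => v.isLeft = true)).card = k ∧
              (Q.filter (fun v => v.isRight = true)).card = k ^ 2 ∧
              HasPM H Q ∧ HasPM H (Q ∪ R)}.ncard : ℝ) := by
  obtain ⟨N, hN⟩ := eventually_choose_bounds k hk b hb0
  refine ⟨N, fun n hn H hH hd R hRl hRr => ?_⟩
  obtain ⟨hkn, hb, hD, hDb⟩ := hN n hn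
  simp only [card_filter_isLeft, card_filter_isRight] at hRl hRr ⊢
  obtain ⟨x₀, hx₀⟩ := Finset.card_eq_one.1 hRl
  have hR : R = partiteEdge x₀ R.toRight := by
    ext (x | v)
    · rw [inl_mem_partiteEdge, ← Finset.mem_toLeft, hx₀, Finset.mem_singleton]
    · rw [inr_mem_partiteEdge, Finset.mem_toRight]
  classical
  rw [Set.ncard_eq_toFinset_card']
  have h := card_absorbing_ge H k hk (by simpa using hkn) hH b hb0
    (by simpa only [Fintype.card_fin] using hd) (by simpa only [Fintype.card_fin] using hb)
    (by simpa only [Fintype.card_fin] using hD) (by simpa only [Fintype.card_fin] using hDb)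
    x₀ R.toRight hRr
  rw [← hR, Fintype.card_fin] at h
  exact h _ fun Q => by rw [Set.mem_toFinset, Set.mem_ofPred_eq]
end

section
/- Let ε be a sufficiently small positive constant, and let n, k be integers with k ≥ 3 and n ≥ 40k^2/ε. Set a_1 = ε/(8k), a_2 = ε/(8k^3), and let a_3 < ε/(2^k · k! · 8k). Let H be a (1,k)-partite (k+1)-graph with partition classes X, [n], |X| = n/k. Suppose that d_H({x,v}) ≥ binom(n-1,k-1) - binom(n-n/k,k-1) - a_3·n^{k-1} for every x ∈ X and v ∈ [n], and that |E(𝓗_k(n,n/k)) \ E(H_0)| ≥ ε·e(𝓗_k(n,n/k)) for every isomorphic copy H_0 of H with V(H_0) = V(𝓗_k(n,n/k)). Then H is (𝓐, a_1)-dense, where 𝓐 = { A ⊆ V(H) : |A ∩ X| ≥ (1/k - a_1)n and |A ∩ [n]| ≥ (1 - 1/k - a_2)n }. -/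
section

open Finset

lemma card_filter_mem_powersetCard {V : Type*} [DecidableEq V] (S : Finset V) {v : V}
    (hv : v ∈ S) {k : ℕ} (hk : 1 ≤ k) :
    #{s ∈ powersetCard k S | v ∈ s} = (#S - 1).choose (k - 1) := by
  have h1 : #{s ∈ powersetCard k S | v ∈ s} + #{s ∈ powersetCard k S | v ∉ s} = (#S).choose k := by
    rw [card_filter_add_card_filter_not, card_powersetCard]
  have h2 : {s ∈ powersetCard k S | v ∉ s} = powersetCard k (S.erase v) := by
    ext s
    simp only [mem_filter, mem_powersetCard, subset_erase]
    tauto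
  rw [h2, card_powersetCard, card_erase_of_mem hv] at h1
  have hS : 1 ≤ #S := card_pos.2 ⟨v, hv⟩
  obtain ⟨p, hp⟩ := Nat.exists_eq_add_of_le' hS
  obtain ⟨j, rfl⟩ := Nat.exists_eq_add_of_le' hk
  rw [hp, Nat.choose_succ_succ'] at h1
  simp only [hp, Nat.add_sub_cancel] at h1 ⊢
  omega

/-- The `k`-sets meeting both `W` and its complement. -/
def crossing {V : Type*} [Fintype V] [DecidableEq V] (k : ℕ) (W : Finset V) :
    Finset (Finset V) :=
  {s ∈ powersetCard k univ | (∃ v ∈ s, v ∉ W) ∧ ∃ v ∈ s, v ∈ W}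

lemma card_crossing_ge {V : Type*} [Fintype V] [DecidableEq V] (k : ℕ) (W : Finset V) :
    (Fintype.card V).choose k ≤ #(crossing k W) + (#W).choose k + (#Wᶜ).choose k := by
  rw [← card_powersetCard k W, ← card_powersetCard k Wᶜ, ← card_univ, ← card_powersetCard k univ]
  refine (card_le_card (t := crossing k W ∪ powersetCard k W ∪ powersetCard k Wᶜ) ?_).trans
    ((card_union_le _ _).trans (Nat.add_le_add_right (card_union_le _ _) _))
  intro s hs
  simp only [crossing, mem_union, mem_filter, mem_powersetCard, subset_iff, mem_compl,
    mem_univ] at hs ⊢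
  grind

lemma card_crossing_sdiff_le {V : Type*} [Fintype V] [DecidableEq V] {k : ℕ} (hk : 1 ≤ k)
    (W B : Finset V) (L : Finset (Finset V)) (hL : ∀ s ∈ L, #s = k) (D : ℝ)
    (hD : ∀ v ∈ W, D ≤ #{s ∈ L | v ∈ s}) :
    (#(crossing k W \ L) : ℝ) ≤
      #W * ((Fintype.card V - 1).choose (k - 1) - (#W - 1).choose (k - 1) - D) +
        k * (#{s ∈ L | s ⊆ B} + #(W \ B) * (Fintype.card V - 1).choose (k - 1)) := by
  have hcover : #(crossing k W \ L) ≤ ∑ v ∈ W, #{s ∈ crossing k W \ L | v ∈ s} := by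
    refine (card_le_card ?_).trans card_biUnion_le
    intro s hs
    have hs' := hs
    simp only [crossing, mem_sdiff, mem_filter] at hs'
    obtain ⟨v, hv, hvW⟩ := hs'.1.2.2
    exact mem_biUnion.2 ⟨v, hvW, mem_filter.2 ⟨hs, hv⟩⟩
  have hlocal : ∀ v ∈ W, #{s ∈ crossing k W \ L | v ∈ s} + #{s ∈ L | v ∈ s} +
      (#W - 1).choose (k - 1) ≤
      (Fintype.card V - 1).choose (k - 1) + #{s ∈ {s ∈ L | s ⊆ W} | v ∈ s} := by
    intro v hv
    rw [← card_filter_mem_powersetCard W hv hk, ← card_univ,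
      ← card_filter_mem_powersetCard univ (mem_univ v) hk, ← card_union_of_disjoint,
      ← card_union_add_card_inter]
    · refine Nat.add_le_add (card_le_card ?_) (card_le_card ?_)
      · intro s
        simp only [crossing, mem_union, mem_filter, mem_powersetCard, mem_sdiff, subset_univ]
        grind
      · intro s
        simp only [crossing, mem_union, mem_inter, mem_filter, mem_powersetCard, mem_sdiff,
          subset_iff]
        grind
    · rw [disjoint_left]
      intro s
      simp only [mem_filter, mem_sdiff]
      tauto
  have hdouble : ∑ v ∈ W, #{s ∈ {s ∈ L | s ⊆ W} | v ∈ s} = k * #{s ∈ L | s ⊆ W} := by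
    have := sum_card_bipartiteAbove_eq_sum_card_bipartiteBelow
      (s := W) (t := {s ∈ L | s ⊆ W}) (fun v s => v ∈ s)
    simp only [bipartiteAbove, bipartiteBelow] at this
    rw [this, sum_congr rfl (g := fun _ => k), sum_const, smul_eq_mul, mul_comm]
    intro s hs
    rw [mem_filter] at hs
    rw [filter_mem_eq_inter, inter_eq_right.2 hs.2, hL s hs.1]
  have hinside : #{s ∈ L | s ⊆ W} ≤
      #{s ∈ L | s ⊆ B} + #(W \ B) * (Fintype.card V - 1).choose (k - 1) := by
    have hsub : {s ∈ L | s ⊆ W} ⊆ {s ∈ L | s ⊆ B} ∪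
        (W \ B).biUnion fun w => {s ∈ powersetCard k univ | w ∈ s} := by
      intro s
      simp only [mem_union, mem_filter, mem_biUnion, mem_sdiff, mem_powersetCard, subset_iff,
        mem_univ]
      grind
    refine (card_le_card hsub).trans ((card_union_le _ _).trans (Nat.add_le_add_left ?_ _))
    refine card_biUnion_le_card_mul _ _ _ fun w _ => ?_
    rw [card_filter_mem_powersetCard univ (mem_univ w) hk, card_univ]
  calc (#(crossing k W \ L) : ℝ) ≤ ∑ v ∈ W, (#{s ∈ crossing k W \ L | v ∈ s} : ℝ) := by
        exact_mod_cast hcover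
    _ ≤ ∑ v ∈ W, (((Fintype.card V - 1).choose (k - 1) - (#W - 1).choose (k - 1) - D) +
          #{s ∈ {s ∈ L | s ⊆ W} | v ∈ s} : ℝ) := by
        refine sum_le_sum fun v hv => ?_
        have h1 := hD v hv
        have h2 : (_ : ℝ) ≤ _ := Nat.cast_le.2 (hlocal v hv)
        push_cast at h2
        linarith
    _ = #W * ((Fintype.card V - 1).choose (k - 1) - (#W - 1).choose (k - 1) - D) +
          (k : ℝ) * #{s ∈ L | s ⊆ W} := by
        rw [sum_add_distrib, sum_const, nsmul_eq_mul]
        congr 1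
        exact_mod_cast hdouble
    _ ≤ _ := by
        gcongr
        exact_mod_cast hinside

lemma pow_mul_choose_le {p n : ℕ} (h : p ≤ n) (k : ℕ) :
    n ^ k * p.choose k ≤ p ^ k * n.choose k := by
  have hdesc : ∀ k, n ^ k * p.descFactorial k ≤ p ^ k * n.descFactorial k := by
    intro k
    induction k with
    | zero => simp
    | succ j ih =>
      have hstep : n * (p - j) ≤ p * (n - j) := by
        rw [Nat.mul_sub, Nat.mul_sub, mul_comm n p]
        exact Nat.sub_le_sub_left (Nat.mul_le_mul_right j h) _
      calc n ^ (j + 1) * p.descFactorial (j + 1)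
          = (n * (p - j)) * (n ^ j * p.descFactorial j) := by
            rw [Nat.descFactorial_succ]; ring
        _ ≤ (p * (n - j)) * (p ^ j * n.descFactorial j) := Nat.mul_le_mul hstep ih
        _ = _ := by rw [Nat.descFactorial_succ]; ring
  have := hdesc k
  rw [Nat.descFactorial_eq_factorial_mul_choose, Nat.descFactorial_eq_factorial_mul_choose] at this
  refine Nat.le_of_mul_le_mul_left (c := k.factorial) ?_ k.factorial_pos
  linarith

lemma choose_le_div_pow_mul {p n : ℕ} (h : p ≤ n) (hn : 0 < n) (k : ℕ) :
    (p.choose k : ℝ) ≤ (p / n : ℝ) ^ k * n.choose k := by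
  rw [div_pow, div_mul_eq_mul_div, le_div_iff₀ (by positivity), mul_comm]
  exact_mod_cast pow_mul_choose_le h k

lemma one_sub_pow_le {x : ℝ} (h0 : 0 ≤ x) (h1 : x ≤ 1) (k : ℕ) :
    (1 - x) ^ k ≤ 1 / (1 + k * x) := by
  have hb : 1 + k * x ≤ (1 + x) ^ k := one_add_mul_le_pow (by linarith) k
  rw [le_div_iff₀ (by positivity)]
  calc (1 - x) ^ k * (1 + k * x) ≤ (1 - x) ^ k * (1 + x) ^ k := by
        gcongr
    _ = (1 - x ^ 2) ^ k := by rw [← mul_pow]; ring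
    _ ≤ 1 := pow_le_one₀ (by nlinarith) (by nlinarith)

lemma choose_add_choose_div_le {n k : ℕ} (hk : 3 ≤ k) (hn : 400 * k ^ 2 ≤ n) :
    ((n - n / k).choose k + (n / k).choose k : ℝ) ≤ 11 / 20 * n.choose k := by
  have hn0 : 0 < n := lt_of_lt_of_le (by positivity) hn
  have hnR : (0 : ℝ) < n := by exact_mod_cast hn0
  have hkR : (3 : ℝ) ≤ k := by exact_mod_cast hk
  have hnkR : 400 * (k : ℝ) ^ 2 ≤ n := by exact_mod_cast hn
  have hmn : n / k ≤ n := Nat.div_le_self n k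
  have hm1 : ((n / k : ℕ) : ℝ) ≤ n / k := Nat.cast_div_le
  have hm2 : (n : ℝ) / k < (n / k : ℕ) + 1 := Nat.lt_floor_add_one (n / k : ℝ) |>.trans_eq (by
    rw [Nat.floor_div_eq_div])
  set m := n / k
  have hx0 : (0 : ℝ) ≤ m / n := by positivity
  have hx1 : (m / n : ℝ) ≤ 1 / 3 := by
    rw [div_le_div_iff₀ hnR (by norm_num)]
    rw [le_div_iff₀ (by linarith)] at hm1
    nlinarith [(Nat.cast_nonneg m : (0 : ℝ) ≤ m)]
  have hkx : 99 / 100 ≤ k * (m / n : ℝ) := by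
    rw [← mul_div_assoc, le_div_iff₀ hnR]
    rw [div_lt_iff₀ (by linarith)] at hm2
    nlinarith
  have h1 := choose_le_div_pow_mul (Nat.sub_le n m) hn0 k
  have h2 := choose_le_div_pow_mul hmn hn0 k
  rw [Nat.cast_sub hmn, sub_div, div_self hnR.ne'] at h1
  have h3 : (1 - m / n : ℝ) ^ k ≤ 51 / 100 := by
    refine (one_sub_pow_le hx0 (by linarith) k).trans ?_
    rw [div_le_div_iff₀ (by linarith) (by norm_num)]
    linarith
  have h4 : (m / n : ℝ) ^ k ≤ 1 / 27 := by
    calc (m / n : ℝ) ^ k ≤ (m / n : ℝ) ^ 3 := pow_le_pow_of_le_one hx0 (by linarith) hk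
      _ ≤ (1 / 3) ^ 3 := by gcongr
      _ = _ := by norm_num
  have hN : (0 : ℝ) ≤ n.choose k := by positivity
  nlinarith [mul_le_mul_of_nonneg_right h3 hN, mul_le_mul_of_nonneg_right h4 hN]

lemma mul_choose_sub_one {n k : ℕ} (hn : 1 ≤ n) (hk : 1 ≤ k) :
    n * (n - 1).choose (k - 1) = k * n.choose k := by
  obtain ⟨p, rfl⟩ := Nat.exists_eq_add_of_le' hn
  obtain ⟨j, rfl⟩ := Nat.exists_eq_add_of_le' hk
  have := Nat.add_one_mul_choose_eq p j
  simp only [Nat.add_sub_cancel]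
  linarith

lemma sq_mul_choose_sub_two_le {n k : ℕ} (hk : 2 ≤ k) (hkn : k ≤ n) :
    n ^ 2 * (n - 2).choose (k - 2) ≤ k ^ 2 * n.choose k := by
  have h1 := mul_choose_sub_one (n := n) (k := k) (by omega) (by omega)
  have h2 := mul_choose_sub_one (n := n - 1) (k := k - 1) (by omega) (by omega)
  rw [Nat.sub_sub, Nat.sub_sub] at h2
  obtain ⟨p, rfl⟩ : ∃ p, n = p + 1 := ⟨n - 1, by omega⟩
  obtain ⟨j, rfl⟩ : ∃ j, k = j + 1 := ⟨k - 1, by omega⟩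
  simp only [Nat.add_sub_cancel, Nat.reduceAdd] at h1 h2 ⊢
  set N := (p + 1).choose (j + 1)
  set C := p.choose j
  set D := (p + 1 - 2).choose (j + 1 - 2)
  have hp : 0 < p := by omega
  refine Nat.le_of_mul_le_mul_left (c := p) ?_ hp
  calc p * ((p + 1) ^ 2 * D) = (p + 1) ^ 2 * (p * D) := by ring
    _ = (p + 1) * j * ((p + 1) * C) := by rw [h2]; ring
    _ = ((p + 1) * j) * ((j + 1) * N) := by rw [h1]
    _ ≤ (p * (j + 1)) * ((j + 1) * N) := by
        refine Nat.mul_le_mul_right _ ?_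
        nlinarith
    _ = _ := by ring

lemma pow_le_two_pow_mul_factorial_mul_choose {n k : ℕ} (h : 2 * k ≤ n) :
    n ^ k ≤ 2 ^ k * k.factorial * n.choose k := by
  calc n ^ k ≤ (2 * (n + 1 - k)) ^ k := Nat.pow_le_pow_left (by omega) k
    _ = 2 ^ k * (n + 1 - k) ^ k := mul_pow _ _ _
    _ ≤ 2 ^ k * n.descFactorial k := by
        gcongr
        exact Nat.pow_sub_le_descFactorial n k
    _ = _ := by rw [Nat.descFactorial_eq_factorial_mul_choose]; ring

/-- The edge `{x} ∪ s` of a `(1,k)`-partite hypergraph. -/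
def liftEdge {α β : Type*} [DecidableEq α] [DecidableEq β] (x : α) (s : Finset β) :
    Finset (α ⊕ β) :=
  insert (Sum.inl x) (s.image Sum.inr)

section liftEdge

variable {α β : Type*} [DecidableEq α] [DecidableEq β]

@[simp]
lemma inl_mem_liftEdge {x y : α} {s : Finset β} : Sum.inl y ∈ liftEdge x s ↔ y = x := by
  simp [liftEdge]

@[simp]
lemma inr_mem_liftEdge {x : α} {v : β} {s : Finset β} : Sum.inr v ∈ liftEdge x s ↔ v ∈ s := by
  simp [liftEdge]

lemma liftEdge_inj {x y : α} {s t : Finset β} : liftEdge x s = liftEdge y t ↔ x = y ∧ s = t := by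
  refine ⟨fun h => ⟨?_, ?_⟩, fun h => by rw [h.1, h.2]⟩
  · rw [← inl_mem_liftEdge (s := t), ← h, inl_mem_liftEdge]
  · ext v
    rw [← inr_mem_liftEdge (x := x), h, inr_mem_liftEdge]

lemma liftEdge_injective (x : α) : Function.Injective (liftEdge x : Finset β → _) :=
  fun _ _ h => (liftEdge_inj.1 h).2

lemma liftEdge_subset_iff {x : α} {s : Finset β} {A : Finset (α ⊕ β)} :
    liftEdge x s ⊆ A ↔ x ∈ A.toLeft ∧ s ⊆ A.toRight := by
  simp [liftEdge, subset_iff]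

lemma image_liftEdge (τ : Equiv.Perm β) (x : α) (s : Finset β) :
    (liftEdge x s).image (Equiv.sumCongr (Equiv.refl α) τ) = liftEdge x (s.image τ) := by
  simp [liftEdge, image_insert, image_image, Function.comp_def]

lemma card_biUnion_image_liftEdge (S : Finset α) (F : α → Finset (Finset β)) :
    #(S.biUnion fun x => (F x).image (liftEdge x)) = ∑ x ∈ S, #(F x) := by
  rw [card_biUnion]
  · exact sum_congr rfl fun x _ => card_image_of_injective _ (liftEdge_injective x)
  · intro x _ y _ hxy
    rw [Function.onFun, disjoint_left]
    simp only [mem_image, not_exists, not_and]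
    rintro _ ⟨s, _, rfl⟩ t _ h
    exact hxy (liftEdge_inj.1 h).1.symm

variable [Fintype β]

/-- The `k`-sets which form an edge of `H` together with `x`. -/
def link (H : Finset (Finset (α ⊕ β))) (k : ℕ) (x : α) : Finset (Finset β) :=
  {s ∈ powersetCard k univ | liftEdge x s ∈ H}

lemma mem_link {H : Finset (Finset (α ⊕ β))} {k : ℕ} {x : α} {s : Finset β} :
    s ∈ link H k x ↔ #s = k ∧ liftEdge x s ∈ H := by
  simp [link]

variable {H : Finset (Finset (α ⊕ β))} {k : ℕ}

lemma card_le_of_partite [Fintype α] (hH : ∀ e ∈ H, ∃ x s, #s = k ∧ e = liftEdge x s) :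
    #H ≤ Fintype.card α * (Fintype.card β).choose k := by
  have hsub : H ⊆ univ.biUnion fun x : α => (powersetCard k univ).image (liftEdge x) := by
    intro e he
    obtain ⟨x, s, hs, rfl⟩ := hH e he
    simp only [mem_biUnion, mem_image, mem_powersetCard, mem_univ, true_and]
    exact ⟨x, s, ⟨subset_univ s, hs⟩, rfl⟩
  refine (card_le_card hsub).trans_eq ?_
  rw [card_biUnion_image_liftEdge]
  simp

lemma card_filter_mem_mem_le_s11 (hH : ∀ e ∈ H, ∃ x s, #s = k ∧ e = liftEdge x s) (x : α) (v : β) :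
    #{e ∈ H | Sum.inl x ∈ e ∧ Sum.inr v ∈ e} ≤ #{s ∈ link H k x | v ∈ s} := by
  refine (card_le_card (t := {s ∈ link H k x | v ∈ s}.image (liftEdge x)) ?_).trans card_image_le
  intro e he
  rw [mem_filter] at he
  obtain ⟨y, s, hs, rfl⟩ := hH e he.1
  rw [inl_mem_liftEdge, inr_mem_liftEdge] at he
  obtain ⟨he, rfl, hv⟩ := he
  exact mem_image_of_mem _ (mem_filter.2 ⟨mem_link.2 ⟨hs, he⟩, hv⟩)

lemma sum_card_link_le (A : Finset (α ⊕ β)) :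
    ∑ x ∈ A.toLeft, #{s ∈ link H k x | s ⊆ A.toRight} ≤ #{e ∈ H | e ⊆ A} := by
  rw [← card_biUnion_image_liftEdge]
  refine card_le_card ?_
  simp only [biUnion_subset, image_subset_iff, mem_filter, mem_link]
  exact fun x hx s hs => ⟨hs.1.2, liftEdge_subset_iff.2 ⟨hx, hs.2⟩⟩

end liftEdge

lemma card_filter_isLeft_s11 {α β : Type*} (A : Finset (α ⊕ β)) :
    #{v ∈ A | v.isLeft = true} = #A.toLeft := by
  rw [← card_map (Function.Embedding.inl (β := β)) (s := A.toLeft)]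
  congr 1
  ext (x | v) <;> simp

lemma card_filter_isRight_s11 {α β : Type*} (A : Finset (α ⊕ β)) :
    #{v ∈ A | v.isRight = true} = #A.toRight := by
  rw [← card_map (Function.Embedding.inr (α := α)) (s := A.toRight)]
  congr 1
  ext (x | v) <;> simp

lemma calHk_eq_biUnion (n k : ℕ) :
    calHk n k = univ.biUnion fun x : Fin (n / k) =>
      (crossing k {v : Fin n | n / k ≤ v}).image (liftEdge x) := by
  unfold liftEdge
  simp [calHk, crossing]

lemma card_calHk (n k : ℕ) :
    #(calHk n k) = n / k * #(crossing k {v : Fin n | n / k ≤ v}) := by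
  rw [calHk_eq_biUnion, card_biUnion_image_liftEdge]
  simp

lemma exists_perm_mem_iff {V : Type*} [Fintype V] [DecidableEq V] {S T : Finset V}
    (h : #S = #T) : ∃ τ : Equiv.Perm V, ∀ v, τ v ∈ T ↔ v ∈ S := by
  let e : {v // v ∈ S} ≃ {v // v ∈ T} := S.equivOfCardEq h
  refine ⟨e.extendSubtype, fun v => ⟨fun hv => ?_, fun hv => e.extendSubtype_mem v hv⟩⟩
  by_contra hS
  exact e.extendSubtype_not_mem v hS hv

lemma card_calHk_sdiff_image_le {n k : ℕ} (H : Finset (Finset (Fin (n / k) ⊕ Fin n)))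
    {W : Finset (Fin n)} {τ : Equiv.Perm (Fin n)}
    (hτ : ∀ v, τ v ∈ ({v : Fin n | n / k ≤ v} : Finset _) ↔ v ∈ W) (S : Finset (Fin (n / k))) :
    #(calHk n k \ H.image fun e => e.image (Equiv.sumCongr (Equiv.refl _) τ)) ≤
      ∑ x ∈ S, #(crossing k W \ link H k x) +
        #Sᶜ * #(crossing k {v : Fin n | n / k ≤ v}) := by
  set W₀ : Finset (Fin n) := {v : Fin n | n / k ≤ v}
  set H' := H.image fun e => e.image (Equiv.sumCongr (Equiv.refl (Fin (n / k))) τ)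
  have hsub : calHk n k \ H' ⊆ univ.biUnion fun x : Fin (n / k) =>
      {s ∈ crossing k W₀ | liftEdge x s ∉ H'}.image (liftEdge x) := by
    intro e he
    rw [mem_sdiff, calHk_eq_biUnion, mem_biUnion] at he
    obtain ⟨⟨x, hx, hxe⟩, he⟩ := he
    obtain ⟨s, hs, rfl⟩ := mem_image.1 hxe
    exact mem_biUnion.2 ⟨x, hx, mem_image_of_mem _ (mem_filter.2 ⟨hs, he⟩)⟩
  refine (card_le_card hsub).trans ?_
  rw [card_biUnion_image_liftEdge, ← sum_add_sum_compl S]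
  refine Nat.add_le_add (sum_le_sum fun x _ => ?_)
    (sum_le_card_nsmul _ _ _ fun x _ => card_filter_le _ _)
  refine card_le_card_of_injOn (fun s => s.image τ.symm) ?_
    (image_injective τ.symm.injective).injOn
  intro s hs
  simp only [coe_filter, Set.mem_ofPred_eq, crossing, mem_filter, mem_powersetCard] at hs
  obtain ⟨⟨⟨-, hs⟩, ⟨u, hu, huW⟩, ⟨w, hw, hwW⟩⟩, hsH⟩ := hs
  have hcard : #(s.image τ.symm) = k := by rw [card_image_of_injective _ τ.symm.injective, hs]
  simp only [crossing, coe_sdiff, Set.mem_sdiff, mem_coe, mem_filter, mem_powersetCard, mem_link]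
  refine ⟨⟨⟨subset_univ _, hcard⟩, ⟨τ.symm u, mem_image_of_mem _ hu, ?_⟩,
    ⟨τ.symm w, mem_image_of_mem _ hw, ?_⟩⟩, fun h => hsH ?_⟩
  · rwa [← hτ, Equiv.apply_symm_apply]
  · rwa [← hτ, Equiv.apply_symm_apply]
  · refine mem_image.2 ⟨_, h.2, ?_⟩
    rw [image_liftEdge, image_image]
    simp

lemma exists_card_eq_and_card_sdiff_eq {V : Type*} [Fintype V] [DecidableEq V] (B : Finset V) {r : ℕ}
    (hr : r ≤ Fintype.card V) : ∃ W : Finset V, #W = r ∧ #(W \ B) = r - #B := by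
  rcases le_total r #B with h | h
  · obtain ⟨W, hWB, hW⟩ := exists_subset_card_eq h
    exact ⟨W, hW, by rw [sdiff_eq_empty_iff_subset.2 hWB, card_empty, Nat.sub_eq_zero_of_le h]⟩
  · obtain ⟨W, hBW, hW⟩ := exists_superset_card_eq h hr
    exact ⟨W, hW, by rw [card_sdiff_of_subset hBW, hW]⟩

lemma card_filter_val_ge_div (n k : ℕ) : #({v : Fin n | n / k ≤ v} : Finset _) = n - n / k := by
  have h := card_filter_add_card_filter_not (s := (univ : Finset (Fin n))) (fun v => (v : ℕ) < n / k)
  simp only [not_lt, Fin.card_filter_val_lt, card_univ, Fintype.card_fin,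
    min_eq_right (Nat.div_le_self n k)] at h
  omega

lemma missing_numeric_lt {ε k n m q w N c C₁ C₂ a EA h : ℝ} (hε : 0 < ε) (hk : 3 ≤ k)
    (hkn : 40 * k ^ 2 ≤ ε * n) (hm : 10 ≤ m) (hnm : n ≤ k * (m + 1)) (hn : 0 ≤ n)
    (hq0 : 0 ≤ q) (hqm : q ≤ m) (hq : (1 / k - ε / (8 * k)) * n ≤ q) (hmn : m ≤ n / k)
    (hw : w ≤ 1 + ε / (8 * k ^ 3) * n) (hN : 0 < N) (hc : 9 / 20 * N ≤ c) (hC₁ : 0 ≤ C₁)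
    (hC₂ : 0 ≤ C₂) (hnC₁ : n * C₁ = k * N) (hnC₂ : n ^ 2 * C₂ ≤ k ^ 2 * N)
    (ha : a ≤ ε / (8 * k) * N) (hEA : EA < ε / (8 * k) * h) (hh : h ≤ m * N) :
    q * (n * C₂ + a) + k * EA + q * (k * (w * C₁)) + (m - q) * c < ε * (m * c) := by
  have hk0 : 0 < k := by linarith
  have hdiv : ε / (8 * k) ≤ ε / 24 := by gcongr; linarith
  have h1 : n * C₂ ≤ ε / 40 * N := by
    have : k ^ 2 * (40 * (n * C₂)) ≤ k ^ 2 * (ε * N) := by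
      nlinarith [mul_le_mul_of_nonneg_right hkn (mul_nonneg hn hC₂)]
    have := le_of_mul_le_mul_left this (by positivity)
    linarith
  have h2 : a ≤ ε / 24 * N := ha.trans (by gcongr)
  have h3 : k * C₁ ≤ ε / 40 * N := by
    have : k * (40 * (k * C₁)) ≤ k * (ε * N) := by
      nlinarith [mul_le_mul_of_nonneg_right hkn hC₁]
    have := le_of_mul_le_mul_left this hk0
    linarith
  have h4 : k * (w * C₁) ≤ ε / 40 * N + ε / 24 * N := by
    calc k * (w * C₁) ≤ k * ((1 + ε / (8 * k ^ 3) * n) * C₁) := by gcongr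
      _ = k * C₁ + ε / (8 * k ^ 2) * (n * C₁) := by field_simp
      _ = k * C₁ + ε / (8 * k) * N := by rw [hnC₁]; field_simp
      _ ≤ _ := by gcongr
  have h5 : k * EA ≤ ε / 8 * (m * N) := by
    calc k * EA ≤ k * (ε / (8 * k) * h) := by gcongr
      _ = ε / 8 * h := by field_simp
      _ ≤ _ := by gcongr
  have h6 : m - q ≤ ε * (11 / 80 * m) := by
    calc m - q ≤ n / k - (1 / k - ε / (8 * k)) * n := by linarith
      _ = ε / (8 * k) * n := by ring
      _ ≤ ε / (8 * k) * (k * (m + 1)) := by gcongr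
      _ = ε / 8 * (m + 1) := by field_simp
      _ ≤ _ := by nlinarith
  have h7 : q * (n * C₂ + a + k * (w * C₁)) ≤ m * (2 / 15 * (ε * N)) := by
    calc q * (n * C₂ + a + k * (w * C₁)) ≤ q * (2 / 15 * (ε * N)) := by gcongr; linarith
      _ ≤ _ := by gcongr
  have hc0 : 0 < c := by linarith
  have h8 : (m - q) * c ≤ ε * (11 / 80 * m) * c := by gcongr
  have h9 : ε * m * (9 / 20 * N) ≤ ε * m * c := by gcongr
  have h10 : 0 < ε * m * N := by positivity
  nlinarith

lemma choose_sub_choose_pred_le {n m k : ℕ} (hk : 2 ≤ k) (hm : 1 ≤ m) (hmn : m < n) :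
    ((n - m).choose (k - 1) : ℝ) - (n - m - 1).choose (k - 1) ≤ (n - 2).choose (k - 2) := by
  obtain ⟨p, hp⟩ : ∃ p, n - m = p + 1 := ⟨n - m - 1, by omega⟩
  obtain ⟨j, rfl⟩ : ∃ j, k = j + 2 := ⟨k - 2, by omega⟩
  rw [hp, show j + 2 - 1 = j + 1 by omega, Nat.choose_succ_succ']
  simp only [Nat.add_sub_cancel, Nat.cast_add, add_sub_cancel_right]
  exact_mod_cast Nat.choose_le_choose j (by omega)

lemma dense_of_far_of_liftEdge {ε : ℝ} (hε : 0 < ε) (hε' : ε < 1 / 10) {k n : ℕ} (hk : 3 ≤ k)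
    (hn : (40 * (k : ℝ) ^ 2) / ε ≤ n) {a₃ : ℝ}
    (ha₃ : a₃ < ε / (2 ^ k * (Nat.factorial k : ℝ) * (8 * k)))
    {H : Finset (Finset (Fin (n / k) ⊕ Fin n))}
    (hH : ∀ e ∈ H, ∃ x s, #s = k ∧ e = liftEdge x s)
    (hdeg : ∀ (x : Fin (n / k)) (v : Fin n),
      ((n - 1).choose (k - 1) : ℝ) - (n - n / k).choose (k - 1) - a₃ * (n : ℝ) ^ (k - 1)
        ≤ #{e ∈ H | Sum.inl x ∈ e ∧ Sum.inr v ∈ e})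
    (hfar : ∀ σ : Equiv.Perm (Fin (n / k) ⊕ Fin n),
      ε * #(calHk n k) ≤ #(calHk n k \ H.image fun e => e.image σ))
    {A : Finset (Fin (n / k) ⊕ Fin n)}
    (hAl : (1 / (k : ℝ) - ε / (8 * k)) * n ≤ #A.toLeft)
    (hAr : (1 - 1 / (k : ℝ) - ε / (8 * (k : ℝ) ^ 3)) * n ≤ #A.toRight) :
    ε / (8 * k) * #H ≤ #{e ∈ H | e ⊆ A} := by
  by_contra! hlt
  have hkR : (3 : ℝ) ≤ k := by exact_mod_cast hk
  have hkn : 40 * (k : ℝ) ^ 2 ≤ ε * n := by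
    rw [div_le_iff₀ hε] at hn
    linarith
  have hn400 : 400 * k ^ 2 ≤ n := by
    have : 400 * (k : ℝ) ^ 2 ≤ n := by nlinarith [(Nat.cast_nonneg n : (0 : ℝ) ≤ n)]
    exact_mod_cast this
  have hk2n : 2 * k ≤ n := by nlinarith
  have hm10 : 10 ≤ n / k := by
    rw [Nat.le_div_iff_mul_le (by omega)]
    nlinarith
  have hmn : n / k < n := Nat.div_lt_self (by omega) (by omega)
  have hmle : ((n / k : ℕ) : ℝ) ≤ n / k := Nat.cast_div_le
  have hlem : (n : ℝ) ≤ k * ((n / k : ℕ) + 1) := by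
    exact_mod_cast (Nat.lt_mul_div_succ n (by omega)).le
  obtain ⟨W, hW, hWB⟩ := exists_card_eq_and_card_sdiff_eq A.toRight
    (r := n - n / k) (by rw [Fintype.card_fin]; exact Nat.sub_le _ _)
  obtain ⟨τ, hτ⟩ := exists_perm_mem_iff (hW.trans (card_filter_val_ge_div n k).symm)
  have hmiss := card_calHk_sdiff_image_le H hτ A.toLeft
  have hfarτ := hfar (Equiv.sumCongr (Equiv.refl _) τ)
  have hcross := card_crossing_ge k ({v : Fin n | n / k ≤ v} : Finset _)
  have hchoose := choose_add_choose_div_le hk hn400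
  rw [card_compl, card_filter_val_ge_div, Fintype.card_fin, Nat.sub_sub_self hmn.le] at hcross
  rw [card_calHk] at hfarτ
  rw [card_compl, Fintype.card_fin] at hmiss
  have hq : #A.toLeft ≤ n / k := by simpa using card_le_univ A.toLeft
  have hEA := sum_card_link_le (H := H) (k := k) A
  have hHcard := card_le_of_partite hH
  simp only [Fintype.card_fin] at hHcard
  set c := #(crossing k ({v : Fin n | n / k ≤ v} : Finset _))
  set a := ε / (2 ^ k * (Nat.factorial k : ℝ) * (8 * k))
  have hw : (#(W \ A.toRight) : ℝ) ≤ 1 + ε / (8 * (k : ℝ) ^ 3) * n := by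
    rcases le_total (n - n / k) #A.toRight with h | h
    · rw [hWB, Nat.sub_eq_zero_of_le h, Nat.cast_zero]
      positivity
    · rw [hWB, Nat.cast_sub h, Nat.cast_sub hmn.le]
      have : (n : ℝ) / k ≤ (n / k : ℕ) + 1 := by
        rw [div_le_iff₀ (by linarith)]
        linarith
      have : (1 - 1 / (k : ℝ) - ε / (8 * (k : ℝ) ^ 3)) * n =
        n - n / k - ε / (8 * (k : ℝ) ^ 3) * n := by ring
      linarith
  have ha : a * (n : ℝ) ^ k ≤ ε / (8 * k) * n.choose k := by
    have hpow : (n : ℝ) ^ k ≤ 2 ^ k * k.factorial * n.choose k := by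
      exact_mod_cast pow_le_two_pow_mul_factorial_mul_choose hk2n
    calc a * (n : ℝ) ^ k ≤ a * (2 ^ k * k.factorial * n.choose k) := by gcongr
      _ = _ := by
        have : (k.factorial : ℝ) ≠ 0 := by positivity
        simp only [a]
        field_simp
  have hlink : ∀ x ∈ A.toLeft, (#(crossing k W \ link H k x) : ℝ) ≤
      (n * (n - 2).choose (k - 2) + a * (n : ℝ) ^ k) +
        k * (#{s ∈ link H k x | s ⊆ A.toRight} +
          #(W \ A.toRight) * (n - 1).choose (k - 1)) := by
    intro x _
    have h := card_crossing_sdiff_le (by omega) W A.toRight (link H k x)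
      (fun s hs => (mem_link.1 hs).1) _ (fun v _ => (hdeg x v).trans
        (Nat.cast_le.2 (card_filter_mem_mem_le_s11 hH x v)))
    rw [Fintype.card_fin, hW] at h
    refine h.trans (add_le_add_left ?_ _)
    have hpas := choose_sub_choose_pred_le (by omega : 2 ≤ k) (by omega : 1 ≤ n / k) hmn
    have hle : ((n - n / k : ℕ) : ℝ) ≤ n := by exact_mod_cast Nat.sub_le n (n / k)
    calc _ = ((n - n / k : ℕ) : ℝ) * (((n - n / k).choose (k - 1) - (n - n / k - 1).choose (k - 1)) +
          a₃ * (n : ℝ) ^ (k - 1)) := by ring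
      _ ≤ ((n - n / k : ℕ) : ℝ) * ((n - 2).choose (k - 2) + a * (n : ℝ) ^ (k - 1)) := by gcongr
      _ ≤ n * ((n - 2).choose (k - 2) + a * (n : ℝ) ^ (k - 1)) := by gcongr
      _ = _ := by
        rw [mul_add, ← mul_pow_sub_one (by omega : k ≠ 0) (n : ℝ)]
        ring
  have htotal : (#(calHk n k \ H.image fun e => e.image (Equiv.sumCongr (Equiv.refl _) τ)) : ℝ) ≤
      #A.toLeft * (n * (n - 2).choose (k - 2) + a * (n : ℝ) ^ k) + k * #{e ∈ H | e ⊆ A} +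
        #A.toLeft * (k * (#(W \ A.toRight) * (n - 1).choose (k - 1))) +
        ((n / k : ℕ) - #A.toLeft) * c := by
    have hmiss' : (_ : ℝ) ≤ _ := Nat.cast_le.2 hmiss
    push_cast [Nat.cast_sub hq] at hmiss'
    refine hmiss'.trans (add_le_add_left ?_ _)
    refine (sum_le_sum hlink).trans ?_
    have hEA' : (_ : ℝ) ≤ _ := Nat.cast_le.2 hEA
    push_cast at hEA'
    simp only [mul_add, sum_add_distrib, sum_const, nsmul_eq_mul, ← mul_sum]
    nlinarith [mul_le_mul_of_nonneg_left hEA' (Nat.cast_nonneg k : (0 : ℝ) ≤ k)]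
  have hcross' : (n.choose k : ℝ) ≤ c + (n - n / k).choose k + (n / k).choose k := by
    exact_mod_cast hcross
  have hnum := missing_numeric_lt (ε := ε) (k := k) (n := n) (m := (n / k : ℕ)) (q := #A.toLeft)
    (w := #(W \ A.toRight)) (N := n.choose k) (c := c) (C₁ := (n - 1).choose (k - 1))
    (C₂ := (n - 2).choose (k - 2)) (a := a * (n : ℝ) ^ k) (EA := #{e ∈ H | e ⊆ A}) (h := #H)
    hε hkR hkn (by exact_mod_cast hm10) hlem (by positivity) (by positivity)
    (by exact_mod_cast hq) hAl hmle hw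
    (by exact_mod_cast Nat.choose_pos (by omega)) (by linarith) (by positivity) (by positivity)
    (by exact_mod_cast mul_choose_sub_one (by omega) (by omega))
    (by exact_mod_cast sq_mul_choose_sub_two_le (by omega) (by omega)) ha hlt
    (by exact_mod_cast hHcard)
  push_cast at hfarτ
  linarith

end

/-- Let `ε > 0` be sufficiently small, `k ≥ 3`, `n ≥ 40k²/ε`, and set
`a₁ = ε/(8k)`, `a₂ = ε/(8k³)`, and let `a₃ < ε/(2^k·k!·8k)`. Let `H` be a
`(1,k)`-partite `(k+1)`-graph with classes `X = Fin (n/k)`, `[n]` such that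
`d_H({x,v}) ≥ C(n-1,k-1) - C(n-n/k,k-1) - a₃·n^{k-1}` for all `x ∈ X`, `v ∈ [n]`,
and `|E(𝓗_k(n,n/k)) \ E(H₀)| ≥ ε·e(𝓗_k(n,n/k))` for every isomorphic copy `H₀`
of `H` on `V(𝓗_k(n,n/k))` (given by a vertex permutation). Then `H` is
`(𝓐, a₁)`-dense where `𝓐 = {A : |A ∩ X| ≥ (1/k - a₁)n, |A ∩ [n]| ≥ (1 - 1/k - a₂)n}`. -/
theorem dense_if_far_from_extremal :
    ∃ ε₀ : ℝ, 0 < ε₀ ∧ ∀ ε : ℝ, 0 < ε → ε < ε₀ →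
    ∀ k n : ℕ, 3 ≤ k → (40 * (k : ℝ) ^ 2) / ε ≤ (n : ℝ) →
    ∀ a₃ : ℝ, a₃ < ε / (2 ^ k * (Nat.factorial k : ℝ) * (8 * k)) →
    ∀ H : Finset (Finset (Fin (n / k) ⊕ Fin n)),
      (∀ e ∈ H, ∃ (x : Fin (n / k)) (s : Finset (Fin n)),
        s.card = k ∧ e = insert (Sum.inl x) (s.image Sum.inr)) →
      (∀ (x : Fin (n / k)) (v : Fin n),
        (Nat.choose (n - 1) (k - 1) : ℝ) - (Nat.choose (n - n / k) (k - 1) : ℝ)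
            - a₃ * (n : ℝ) ^ (k - 1)
          ≤ ((H.filter (fun e => Sum.inl x ∈ e ∧ Sum.inr v ∈ e)).card : ℝ)) →
      (∀ σ : Equiv.Perm (Fin (n / k) ⊕ Fin n),
        ε * ((calHk n k).card : ℝ)
          ≤ (((calHk n k) \ (H.image (fun e => e.image σ))).card : ℝ)) →
      ∀ A : Finset (Fin (n / k) ⊕ Fin n),
        (1 / (k : ℝ) - ε / (8 * k)) * (n : ℝ)
            ≤ ((A.filter (fun v => v.isLeft = true)).card : ℝ) →
        (1 - 1 / (k : ℝ) - ε / (8 * (k : ℝ) ^ 3)) * (n : ℝ)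
            ≤ ((A.filter (fun v => v.isRight = true)).card : ℝ) →
        ε / (8 * k) * (H.card : ℝ) ≤ ((H.filter (fun e => e ⊆ A)).card : ℝ) := by
  refine ⟨1 / 10, by norm_num, ?_⟩
  intro ε hε hε' k n hk hn a₃ ha₃ H hH hdeg hfar A hAl hAr
  rw [card_filter_isLeft_s11] at hAl
  rw [card_filter_isRight_s11] at hAr
  exact dense_of_far_of_liftEdge hε hε' hk hn ha₃ hH hdeg hfar hAl hAr
end
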